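/- arXiv:2103.04587 — 3 statements merged into one kernel-verified Lean document; each statement's English description precedes it below -/
import Mathlib

section
/- Let k ∈ ℕ, and for each i ∈ {1,…,k} let G_i and H_i be connected simple graphs such that | |G_i| − |H_i| | ≤ 2. Then q( (G₁ ∪ … ∪ G_k) ∨ (H₁ ∪ … ∪ H_k) ) = 2. -/
open Matrix Filter

/-- `A ∈ S(G)`: real symmetric matrix whose off-diagonal zero pattern is given by `G`. -/
def inS {V : Type*} (G : SimpleGraph V) (A : Matrix V V ℝ) : Prop :=
  A.IsSymm ∧ ∀ i j : V, i ≠ j → (A i j ≠ 0 ↔ G.Adj i j)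

/-- The spectrum of a matrix, as the multiset of roots of its characteristic polynomial. -/
noncomputable def specMultiset {V : Type*} [Fintype V] [DecidableEq V]
    (A : Matrix V V ℝ) : Multiset ℝ :=
  A.charpoly.roots

/-- The number of distinct eigenvalues of a matrix. -/
noncomputable def qMat {V : Type*} [Fintype V] [DecidableEq V] (A : Matrix V V ℝ) : ℕ :=
  (specMultiset A).toFinset.card

/-- `q(G)`: the minimum number of distinct eigenvalues over matrices in `S(G)`. -/
noncomputable def qGraph {V : Type*} [Fintype V] [DecidableEq V] (G : SimpleGraph V) : ℕ :=
  sInf {q | ∃ A : Matrix V V ℝ, inS G A ∧ qMat A = q}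

/-- The strong spectral property. -/
def HasSSP {V : Type*} [Fintype V] [DecidableEq V] (A : Matrix V V ℝ) : Prop :=
  ∀ X : Matrix V V ℝ, X.IsSymm → A * X = X * A →
    Matrix.hadamard A X = 0 → Matrix.hadamard (1 : Matrix V V ℝ) X = 0 → X = 0

/-- Generic realisability of a multiset of eigenvalues for a graph. -/
def GenericallyRealisable {V : Type*} [Fintype V] [DecidableEq V]
    (G : SimpleGraph V) (σ : Multiset ℝ) : Prop :=
  ∀ Y : Finset (V → ℝ), (∀ y ∈ Y, y ≠ 0) →
    ∃ (d : V → ℝ) (U : Matrix V V ℝ),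
      Multiset.map d Finset.univ.val = σ ∧ Uᵀ * U = 1 ∧
      inS G (U * Matrix.diagonal d * Uᵀ) ∧
      ∀ y ∈ Y, ∀ i, U.mulVec y i ≠ 0

/-- The partial join `(G₁, X) ∨ G₂`: the disjoint union of `G₁` and `G₂` together with all
edges joining vertices of `X ⊆ V(G₁)` to vertices of `G₂`. -/
def partialJoin {α β : Type*} (G₁ : SimpleGraph α) (X : Set α) (G₂ : SimpleGraph β) :
    SimpleGraph (α ⊕ β) where
  Adj x y :=
    (∃ a b, G₁.Adj a b ∧ x = Sum.inl a ∧ y = Sum.inl b) ∨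
    (∃ a b, G₂.Adj a b ∧ x = Sum.inr a ∧ y = Sum.inr b) ∨
    (∃ a ∈ X, ∃ b, x = Sum.inl a ∧ y = Sum.inr b) ∨
    (∃ a ∈ X, ∃ b, x = Sum.inr b ∧ y = Sum.inl a)
  symm := by
    constructor
    rintro x y (⟨a, b, hab, rfl, rfl⟩ | ⟨a, b, hab, rfl, rfl⟩ | ⟨a, ha, b, rfl, rfl⟩ |
      ⟨a, ha, b, rfl, rfl⟩)
    · exact Or.inl ⟨b, a, hab.symm, rfl, rfl⟩
    · exact Or.inr (Or.inl ⟨b, a, hab.symm, rfl, rfl⟩)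
    · exact Or.inr (Or.inr (Or.inr ⟨a, ha, b, rfl, rfl⟩))
    · exact Or.inr (Or.inr (Or.inl ⟨a, ha, b, rfl, rfl⟩))
  loopless := by
    constructor
    rintro x (⟨a, b, hab, rfl, h⟩ | ⟨a, b, hab, rfl, h⟩ | ⟨a, ha, b, rfl, h⟩ | ⟨a, ha, b, rfl, h⟩)
    · cases h; exact hab.ne rfl
    · cases h; exact hab.ne rfl
    · exact (Sum.inl_ne_inr h).elim
    · exact (Sum.inr_ne_inl h).elim

/-- The join `G₁ ∨ G₂` of two graphs. -/
def graphJoin {α β : Type*} (G₁ : SimpleGraph α) (G₂ : SimpleGraph β) : SimpleGraph (α ⊕ β) :=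
  partialJoin G₁ Set.univ G₂

/-- The disjoint union of a family of graphs. -/
def sigmaGraph {ι : Type*} {α : ι → Type*} (G : ∀ i, SimpleGraph (α i)) :
    SimpleGraph (Σ i, α i) where
  Adj x y := ∃ (i : ι) (a b : α i), (G i).Adj a b ∧ x = ⟨i, a⟩ ∧ y = ⟨i, b⟩
  symm := by
    constructor
    rintro x y ⟨i, a, b, hab, rfl, rfl⟩
    exact ⟨i, b, a, hab.symm, rfl, rfl⟩
  loopless := by
    constructor
    rintro x ⟨i, a, b, hab, rfl, h⟩
    obtain rfl : a = b := by simpa using h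
    exact hab.ne rfl

/-!
A graph with an edge has `q = 2` as soon as `S(G)` contains an involution, so one looks for a
symmetric involution whose diagonal blocks have the patterns of the two disjoint unions and whose
off-diagonal block has no zero entry.

For a connected graph and distinct prescribed eigenvalues, weight the edges of a spanning tree by a
small `e`, the other edges by a higher power of `e`, and correct the diagonal by the implicit
function theorem so that the spectrum is kept. To leading order, the `j`-th entry of the `i`-th
eigenvector is a nonzero multiple of `e` to the power of the tree distance from `i` to `j`, so the
eigenvectors have no zero entries.

For a single pair with `|H_i| ≤ |G_i|`, embed `H_i` in `G_i` by `f` and give `G_i` distinct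
eigenvalues: `θ b ∈ (-1, 1)` at `f b`, and values from `{1, -1}` at the at most two vertices that
`f` misses. Pairing `θ b` with `-θ b` through `√(1 - θ b ^ 2)` gives an involution, which is
conjugated by the eigenvector matrices `U` and `V`; as `V` may be taken arbitrarily close to `1`
after `U` has been fixed, the off-diagonal block has no zero entry.

One `θ b` is zero. The corresponding unit vectors of the different pairs span a space which the
upper diagonal block annihilates, so rotating this space by an orthogonal matrix without zero
entries preserves the diagonal blocks and fills the off-diagonal blocks between different pairs.
-/

section QMat

variable {V : Type*} [Fintype V] [DecidableEq V] {A : Matrix V V ℝ}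

lemma mem_toFinset_specMultiset {x : ℝ} : x ∈ (specMultiset A).toFinset ↔ x ∈ spectrum ℝ A := by
  rw [Multiset.mem_toFinset, specMultiset, Polynomial.mem_roots A.charpoly_monic.ne_zero,
    mem_spectrum_iff_isRoot_charpoly]

lemma qMat_le_two_of_mul_self_eq_one (hA : A * A = 1) : qMat A ≤ 2 := by
  have spectrum_subset : (specMultiset A).toFinset ⊆ {1, -1} := by
    intro x hx
    have hsq : x ∈ spectrum ℝ A := mem_toFinset_specMultiset.1 hx
    rcases subsingleton_or_nontrivial (Matrix V V ℝ) with _ | _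
    · simp [spectrum.of_subsingleton] at hsq
    have hone := spectrum.pow_mem_pow A 2 hsq
    rw [sq A, hA, spectrum.one_eq, Set.mem_singleton_iff, sq, mul_self_eq_one_iff] at hone
    simpa using hone
  exact (Finset.card_le_card spectrum_subset).trans Finset.card_le_two

lemma two_le_qMat_of_isSymm (hA : A.IsSymm) {i j : V} (hij : i ≠ j) (h : A i j ≠ 0) :
    2 ≤ qMat A := by
  have hA' : IsSelfAdjoint A := by
    rwa [IsSelfAdjoint, star_eq_conjTranspose, conjTranspose_eq_transpose_of_trivial]
  by_contra! hlt
  obtain ⟨r, hr⟩ := Finset.card_le_one_iff_subset_singleton.1 (Nat.lt_succ_iff.1 hlt)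
  have hscalar : A = algebraMap ℝ _ r :=
    CFC.eq_algebraMap_of_spectrum_subset_singleton A r fun x hx =>
      Finset.mem_singleton.1 (hr (mem_toFinset_specMultiset.2 hx))
  exact h (by rw [hscalar, algebraMap_matrix_apply, if_neg hij])

lemma qGraph_eq_two_of_mul_self_eq_one {G : SimpleGraph V} {i j : V} (hij : G.Adj i j)
    (hAG : inS G A) (hA : A * A = 1) : qGraph G = 2 := by
  have two_le : ∀ X, inS G X → 2 ≤ qMat X := fun X hX =>
    two_le_qMat_of_isSymm hX.1 hij.ne ((hX.2 i j hij.ne).2 hij)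
  refine IsLeast.csInf_eq ⟨⟨A, hAG, ?_⟩, ?_⟩
  · exact le_antisymm (qMat_le_two_of_mul_self_eq_one hA) (two_le A hAG)
  · rintro _ ⟨X, hX, rfl⟩
    exact two_le X hX

end QMat

section Pattern

lemma graphJoin_adj_inl_inr {α β : Type*} (G : SimpleGraph α) (H : SimpleGraph β) (a : α) (b : β) :
    (graphJoin G H).Adj (Sum.inl a) (Sum.inr b) := by
  simp [graphJoin, partialJoin]

lemma inS_graphJoin_fromBlocks {α β : Type*} {G : SimpleGraph α} {H : SimpleGraph β}
    {A : Matrix α α ℝ} {B : Matrix α β ℝ} {C : Matrix β β ℝ} (hA : inS G A) (hC : inS H C)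
    (hB : ∀ a b, B a b ≠ 0) : inS (graphJoin G H) (fromBlocks A B Bᵀ C) := by
  refine ⟨by rw [Matrix.IsSymm, fromBlocks_transpose, hA.1, hC.1, transpose_transpose], ?_⟩
  rintro (a | b) (a' | b') hne
  · simpa [graphJoin, partialJoin] using hA.2 a a' (by simpa using hne)
  · simp [graphJoin, partialJoin, hB]
  · simp [graphJoin, partialJoin, hB]
  · simpa [graphJoin, partialJoin] using hC.2 b b' (by simpa using hne)

lemma sigmaGraph_adj_mk {ι : Type*} {α : ι → Type*} {G : ∀ i, SimpleGraph (α i)} {i : ι}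
    {a b : α i} : (sigmaGraph G).Adj ⟨i, a⟩ ⟨i, b⟩ ↔ (G i).Adj a b := by
  constructor
  · rintro ⟨j, a', b', hadj, h1, h2⟩
    cases h1
    cases h2
    exact hadj
  · exact fun hadj => ⟨i, a, b, hadj, rfl, rfl⟩

lemma not_sigmaGraph_adj_of_ne {ι : Type*} {α : ι → Type*} {G : ∀ i, SimpleGraph (α i)} {i j : ι}
    (hij : i ≠ j) (a : α i) (b : α j) : ¬(sigmaGraph G).Adj ⟨i, a⟩ ⟨j, b⟩ := by
  rintro ⟨l, a', b', -, h1, h2⟩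
  exact hij ((congrArg Sigma.fst h1).trans (congrArg Sigma.fst h2).symm)

lemma inS_sigmaGraph_blockDiagonal' {ι : Type*} [DecidableEq ι] {α : ι → Type*}
    {G : ∀ i, SimpleGraph (α i)} {A : ∀ i, Matrix (α i) (α i) ℝ} (hA : ∀ i, inS (G i) (A i)) :
    inS (sigmaGraph G) (blockDiagonal' A) := by
  refine ⟨?_, ?_⟩
  · rw [Matrix.IsSymm, blockDiagonal'_transpose]
    exact congrArg _ (funext fun i => (hA i).1)
  · rintro ⟨i, a⟩ ⟨j, b⟩ hne
    obtain rfl | hij := eq_or_ne i j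
    · rw [blockDiagonal'_apply_eq, sigmaGraph_adj_mk]
      exact (hA i).2 a b (by simpa using hne)
    · simp [blockDiagonal'_apply_ne _ _ _ hij, not_sigmaGraph_adj_of_ne hij]

end Pattern

section Involution

variable {R α β γ : Type*} [CommRing R] [Fintype α] [Fintype β] [Fintype γ]
  [DecidableEq α] [DecidableEq β] [DecidableEq γ]

lemma fromBlocks_mul_self_eq_one_iff {A : Matrix α α R} {B : Matrix α β R} {C : Matrix β β R}
    (hA : A.IsSymm) (hC : C.IsSymm) :
    fromBlocks A B Bᵀ C * fromBlocks A B Bᵀ C = 1 ↔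
      A * A + B * Bᵀ = 1 ∧ A * B + B * C = 0 ∧ Bᵀ * B + C * C = 1 := by
  have off_diagonal_transpose : A * B + B * C = 0 ↔ Bᵀ * A + C * Bᵀ = 0 := by
    rw [← transpose_inj]
    simp only [transpose_add, transpose_mul, hA.eq, hC.eq, transpose_zero]
  rw [fromBlocks_multiply, ← fromBlocks_one, fromBlocks_inj, ← off_diagonal_transpose]
  tauto

lemma fromBlocks_mul_self_eq_one_of_orthogonal {A : Matrix α α R} {B : Matrix α β R}
    {C : Matrix β β R} (h : fromBlocks A B Bᵀ C * fromBlocks A B Bᵀ C = 1)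
    {U : Matrix α α R} {V : Matrix β β R}
    (hU : U ∈ orthogonalGroup α R) (hV : V ∈ orthogonalGroup β R) :
    fromBlocks (U * A * Uᵀ) (U * B * Vᵀ) (U * B * Vᵀ)ᵀ (V * C * Vᵀ) *
      fromBlocks (U * A * Uᵀ) (U * B * Vᵀ) (U * B * Vᵀ)ᵀ (V * C * Vᵀ) = 1 := by
  set N := fromBlocks A B Bᵀ C
  set P := fromBlocks U 0 0 V
  have conj : fromBlocks (U * A * Uᵀ) (U * B * Vᵀ) (U * B * Vᵀ)ᵀ (V * C * Vᵀ) = P * N * Pᵀ := by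
    simp [P, N, fromBlocks_transpose, fromBlocks_multiply, Matrix.mul_assoc]
  have hP : P * Pᵀ = 1 := by
    simp [P, fromBlocks_transpose, fromBlocks_multiply, (mem_orthogonalGroup_iff _ _).1 hU,
      (mem_orthogonalGroup_iff _ _).1 hV]
  calc _ = P * N * (Pᵀ * P) * (N * Pᵀ) := by rw [conj]; simp only [Matrix.mul_assoc]
    _ = P * (N * N) * Pᵀ := by
      rw [mul_eq_one_comm.1 hP, Matrix.mul_one]; simp only [Matrix.mul_assoc]
    _ = 1 := by rw [h, Matrix.mul_one, hP]

lemma one_add_mul_sub_one_mul_transpose_mem_orthogonalGroup {u : Matrix α γ R}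
    (hu : uᵀ * u = 1) {W : Matrix γ γ R} (hW : W ∈ orthogonalGroup γ R) :
    1 + u * (W - 1) * uᵀ ∈ orthogonalGroup α R := by
  rw [mem_orthogonalGroup_iff] at hW ⊢
  calc (1 + u * (W - 1) * uᵀ) * (1 + u * (W - 1) * uᵀ)ᵀ
      = 1 + u * ((W - 1) + (W - 1)ᵀ + (W - 1) * (uᵀ * u) * (W - 1)ᵀ) * uᵀ := by
        simp only [transpose_add, transpose_mul, transpose_one, transpose_transpose,
          Matrix.mul_add, Matrix.add_mul, Matrix.mul_one, Matrix.one_mul, Matrix.mul_assoc]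
        abel
    _ = 1 + u * (W * Wᵀ - 1) * uᵀ := by
        congr 3
        rw [hu]
        simp only [transpose_sub, transpose_one, Matrix.mul_one]
        noncomm_ring
    _ = 1 := by simp [hW]

end Involution

open Topology

section Perturbation

variable {V : Type*} [DecidableEq V]

/-- The off-diagonal part of `Y` with the diagonal replaced by ones: the normalised candidate for an
eigenvector matrix near `1`. The freed diagonal of `Y` is used to store the eigenvalues. -/
def unitDiagonal (Y : V → V → ℝ) : Matrix V V ℝ :=
  of fun j i => if j = i then 1 else Y j i

lemma continuous_unitDiagonal : Continuous (unitDiagonal : (V → V → ℝ) → Matrix V V ℝ) := by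
  refine continuous_matrix fun j i => ?_
  by_cases h : j = i
  · simp only [unitDiagonal, of_apply, if_pos h, continuous_const]
  · simp only [unitDiagonal, of_apply, if_neg h]
    fun_prop

lemma unitDiagonal_single (lam : V → ℝ) : unitDiagonal (fun j => Pi.single j (lam j)) = 1 := by
  ext j i
  by_cases h : j = i <;> simp [unitDiagonal, one_apply, Pi.single_apply, h, eq_comm]

variable [Fintype V]

/-- The entries of `(diagonal d + X) * Z - Z * diagonal lam`, where `Y` encodes the pair `(d, Z)`
through `d j = Y j j` and `Z = unitDiagonal Y`. -/
def eigenResidual (lam : V → ℝ) (p : (V → V → ℝ) × (V → V → ℝ)) : V → V → ℝ := fun j i =>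
  (p.2 j j - lam i) * unitDiagonal p.2 j i + ∑ l, p.1 j l * unitDiagonal p.2 l i

lemma eigenResidual_eq_zero_iff {lam : V → ℝ} {X Y : V → V → ℝ} :
    eigenResidual lam (X, Y) = 0 ↔
      (diagonal (fun j => Y j j) + of X) * unitDiagonal Y = unitDiagonal Y * diagonal lam := by
  have entrywise : ∀ j i, eigenResidual lam (X, Y) j i = ((diagonal (fun j => Y j j) + of X) *
      unitDiagonal Y - unitDiagonal Y * diagonal lam) j i := by
    intro j i
    rw [Matrix.sub_apply, Matrix.add_mul, Matrix.add_apply, diagonal_mul, mul_diagonal, mul_apply]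
    simp only [eigenResidual, of_apply]
    ring
  rw [← sub_eq_zero (b := unitDiagonal Y * diagonal lam), ← Matrix.ext_iff]
  simp only [funext_iff, entrywise, Pi.zero_apply, Matrix.zero_apply]

lemma contDiff_eigenResidual (lam : V → ℝ) : ContDiff ℝ 1 (eigenResidual lam) := by
  have contDiff_unitDiagonal : ∀ j i, ContDiff ℝ 1
      fun p : (V → V → ℝ) × (V → V → ℝ) => unitDiagonal p.2 j i := by
    intro j i
    by_cases h : j = i
    · simp only [unitDiagonal, of_apply, if_pos h, contDiff_const]
    · simp only [unitDiagonal, of_apply, if_neg h]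
      fun_prop
  simp only [contDiff_pi, eigenResidual]
  fun_prop

lemma hasDerivAt_eigenResidual (lam : V → ℝ) (h : V → V → ℝ) (j i : V) :
    HasDerivAt (fun t : ℝ => eigenResidual lam (0, (fun j => Pi.single j (lam j)) + t • h) j i)
      ((if j = i then 1 else lam j - lam i) * h j i) 0 := by
  by_cases hji : j = i
  · subst hji
    simpa [eigenResidual, unitDiagonal] using (hasDerivAt_id (0 : ℝ)).mul_const (h j j)
  · have hd := (((hasDerivAt_id (0 : ℝ)).mul_const (h j j)).const_add (lam j - lam i)).mul
      ((hasDerivAt_id (0 : ℝ)).mul_const (h j i))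
    simpa [eigenResidual, unitDiagonal, hji, Pi.mul_def, add_sub_right_comm, Pi.single_apply,
      eq_comm (a := i)] using hd

lemma isInvertible_fderiv_eigenResidual_comp_inr {lam : V → ℝ} (hlam : Function.Injective lam) :
    (fderiv ℝ (eigenResidual lam) (0, fun j => Pi.single j (lam j)) ∘L
      .inr ℝ (V → V → ℝ) (V → V → ℝ)).IsInvertible := by
  let c : V → V → ℝ := fun j i => if j = i then 1 else lam j - lam i
  have hc : ∀ j i, c j i ≠ 0 := by
    intro j i
    by_cases h : j = i
    · simp [c, h]
    · simpa [c, h, sub_eq_zero] using hlam.ne h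
  let e : (V → V → ℝ) ≃L[ℝ] (V → V → ℝ) :=
    .piCongrRight fun j => .piCongrRight fun i =>
      ContinuousLinearEquiv.unitsEquivAut ℝ (Units.mk0 (c j i) (hc j i))
  refine ⟨e, ContinuousLinearMap.ext fun h => funext fun j => funext fun i => ?_⟩
  set Y₀ : V → V → ℝ := fun j => Pi.single j (lam j)
  have along_line : HasDerivAt (fun t : ℝ => eigenResidual lam (0, Y₀ + t • h))
      (fderiv ℝ (eigenResidual lam) (0, Y₀) (0, h)) 0 := by
    have line : HasDerivAt (fun t : ℝ => ((0 : V → V → ℝ), Y₀ + t • h)) (0, h) 0 := by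
      refine (hasDerivAt_const _ _).prodMk ?_
      simpa using ((hasDerivAt_id (0 : ℝ)).smul_const h).const_add Y₀
    refine HasFDerivAt.comp_hasDerivAt (x := (0 : ℝ)) (l := eigenResidual lam) ?_ line
    simpa using ((contDiff_eigenResidual lam).differentiable one_ne_zero _).hasFDerivAt
  have entry := hasDerivAt_pi.1 (hasDerivAt_pi.1 along_line j) i
  simpa [e, c, mul_comm] using (hasDerivAt_eigenResidual lam h j i).unique entry

lemma exists_eigenvectorMatrix_perturbation {lam : V → ℝ} (hlam : Function.Injective lam) :
    ∃ (d : Matrix V V ℝ → V → ℝ) (Z : Matrix V V ℝ → Matrix V V ℝ),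
      Tendsto d (𝓝 0) (𝓝 lam) ∧ Tendsto Z (𝓝 0) (𝓝 1) ∧ (∀ X i, Z X i i = 1) ∧
        ∀ᶠ X in 𝓝 0, (diagonal (d X) + X) * Z X = Z X * diagonal lam := by
  have hF := (contDiff_eigenResidual lam).contDiffAt.hasStrictFDerivAt
    (x := (0, fun j => Pi.single j (lam j))) one_ne_zero
  have hinv := isInvertible_fderiv_eigenResidual_comp_inr hlam
  set Y := hF.implicitFunctionOfProdDomain hinv
  have hY : Tendsto (fun X : Matrix V V ℝ => Y X) (𝓝 0) (𝓝 fun j => Pi.single j (lam j)) :=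
    hF.tendsto_implicitFunctionOfProdDomain hinv
  have base_point : eigenResidual lam (0, fun j => Pi.single j (lam j)) = 0 :=
    eigenResidual_eq_zero_iff.2 (by simp [unitDiagonal_single])
  refine ⟨fun X j => Y X j j, fun X => unitDiagonal (Y X), ?_, ?_,
    fun X i => by simp [unitDiagonal], ?_⟩
  · refine tendsto_pi_nhds.2 fun j => ?_
    simpa using tendsto_pi_nhds.1 (tendsto_pi_nhds.1 hY j) j
  · simpa [unitDiagonal_single] using! (continuous_unitDiagonal.tendsto _).comp hY
  · filter_upwards [hF.eventually_apply_implicitFunctionOfProdDomain hinv] with X hX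
    exact eigenResidual_eq_zero_iff.1 (hX.trans base_point)

end Perturbation

section Normalisation

variable {V : Type*} [Fintype V]

lemma transpose_mul_self_apply_self_pos {Z : Matrix V V ℝ} {j i : V} (h : Z j i ≠ 0) :
    0 < (Zᵀ * Z) i i := by
  simp only [mul_apply, transpose_apply]
  exact Finset.sum_pos' (fun l _ => mul_self_nonneg _) ⟨j, Finset.mem_univ j, mul_self_pos.2 h⟩

variable [DecidableEq V]

/-- `Z` with each column divided by its Euclidean norm; zero columns stay zero. -/
noncomputable def normalizeCols (Z : Matrix V V ℝ) : Matrix V V ℝ :=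
  Z * diagonal fun i => (√((Zᵀ * Z) i i))⁻¹

lemma tendsto_normalizeCols_one :
    Tendsto (normalizeCols : Matrix V V ℝ → Matrix V V ℝ) (𝓝 1) (𝓝 1) := by
  have hdiag : Tendsto (fun (Z : Matrix V V ℝ) i => (√((Zᵀ * Z) i i))⁻¹) (𝓝 1) (𝓝 1) := by
    refine tendsto_pi_nhds.2 fun i => ?_
    have hcont : Continuous fun Z : Matrix V V ℝ => √((Zᵀ * Z) i i) := by fun_prop
    simpa using (hcont.tendsto 1).inv₀ (by simp)
  have hcont : Continuous fun p : Matrix V V ℝ × (V → ℝ) => p.1 * diagonal p.2 := by fun_prop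
  simpa [Pi.one_def] using! (hcont.tendsto (1, 1)).comp (tendsto_id.prodMk_nhds hdiag)

lemma normalizeCols_apply_ne_zero {Z : Matrix V V ℝ} {j i : V} (h : Z j i ≠ 0) :
    normalizeCols Z j i ≠ 0 := by
  rw [normalizeCols, mul_diagonal]
  exact mul_ne_zero h
    (inv_ne_zero (Real.sqrt_ne_zero'.2 (transpose_mul_self_apply_self_pos h)))

lemma transpose_mul_self_apply_eq_zero {A Z : Matrix V V ℝ} {lam : V → ℝ} (hA : A.IsSymm)
    (hlam : Function.Injective lam) (hAZ : A * Z = Z * diagonal lam) {i j : V} (hij : i ≠ j) :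
    (Zᵀ * Z) i j = 0 := by
  have hcomm : diagonal lam * (Zᵀ * Z) = Zᵀ * Z * diagonal lam := by
    calc diagonal lam * (Zᵀ * Z) = (A * Z)ᵀ * Z := by
          rw [hAZ, transpose_mul, diagonal_transpose, Matrix.mul_assoc]
      _ = Zᵀ * Z * diagonal lam := by
          rw [transpose_mul, hA.eq, Matrix.mul_assoc, hAZ, Matrix.mul_assoc]
  have hentry := congrFun (congrFun hcomm i) j
  rw [diagonal_mul, mul_diagonal, mul_comm] at hentry
  exact (mul_eq_mul_left_iff.1 hentry).resolve_left (hlam.ne hij)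

lemma normalizeCols_mem_orthogonalGroup {A Z : Matrix V V ℝ} {lam : V → ℝ} (hA : A.IsSymm)
    (hlam : Function.Injective lam) (hAZ : A * Z = Z * diagonal lam) (hZ : ∀ i, ∃ j, Z j i ≠ 0) :
    normalizeCols Z ∈ orthogonalGroup V ℝ := by
  rw [mem_orthogonalGroup_iff', normalizeCols, transpose_mul, diagonal_transpose, Matrix.mul_assoc,
    ← Matrix.mul_assoc Zᵀ]
  ext i j
  rw [diagonal_mul, mul_diagonal]
  obtain rfl | hij := eq_or_ne i j
  · obtain ⟨l, hl⟩ := hZ i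
    have hpos := transpose_mul_self_apply_self_pos hl
    have hsqrt := Real.mul_self_sqrt hpos.le
    rw [one_apply_eq]
    nth_rw 2 [← hsqrt]
    have := Real.sqrt_pos.2 hpos
    field_simp
  · rw [transpose_mul_self_apply_eq_zero hA hlam hAZ hij, one_apply_ne hij, zero_mul, mul_zero]

lemma normalizeCols_mul_diagonal_mul_transpose {A Z : Matrix V V ℝ} {lam : V → ℝ} (hA : A.IsSymm)
    (hlam : Function.Injective lam) (hAZ : A * Z = Z * diagonal lam) (hZ : ∀ i, ∃ j, Z j i ≠ 0) :
    normalizeCols Z * diagonal lam * (normalizeCols Z)ᵀ = A := by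
  have hAU : A * normalizeCols Z = normalizeCols Z * diagonal lam := by
    rw [normalizeCols, ← Matrix.mul_assoc, hAZ, Matrix.mul_assoc, Matrix.mul_assoc,
      (commute_diagonal lam _).eq]
  rw [← hAU, Matrix.mul_assoc,
    (mem_orthogonalGroup_iff _ _).1 (normalizeCols_mem_orthogonalGroup hA hlam hAZ hZ),
    Matrix.mul_one]

end Normalisation

section LinearSystem

variable {V : Type*} [Fintype V] [DecidableEq V]

lemma isUnit_det_diagonal_sub_of_rank_lt {K : Type*} [Field K]
    {δ : V → K} (hδ : ∀ j, δ j ≠ 0) {P : Matrix V V K} (r : V → ℕ)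
    (hP : ∀ j l, P j l ≠ 0 → r l < r j) : IsUnit (diagonal δ - P).det := by
  rw [← isUnit_iff_isUnit_det, ← mulVec_injective_iff_isUnit, ← coe_mulVecLin,
    ← LinearMap.ker_eq_bot, LinearMap.ker_eq_bot']
  intro x hx
  have hrow : ∀ j, δ j * x j = ∑ l, P j l * x l := by
    intro j
    have := congrFun hx j
    rwa [mulVecLin_apply, sub_mulVec, Pi.sub_apply, mulVec_diagonal, Pi.zero_apply, sub_eq_zero]
      at this
  have vanish : ∀ n j, r j = n → x j = 0 := by
    intro n
    induction n using Nat.strong_induction_on with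
    | _ n ih =>
      rintro j rfl
      have hsum : ∑ l, P j l * x l = 0 := by
        refine Finset.sum_eq_zero fun l _ => ?_
        by_cases hl : P j l = 0
        · rw [hl, zero_mul]
        · rw [ih _ (hP j l hl) l rfl, mul_zero]
      exact (mul_eq_zero.1 ((hrow j).trans hsum)).resolve_left (hδ j)
  exact funext fun j => vanish _ j rfl

lemma tendsto_of_mulVec_eq {ι : Type*} {f : Filter ι} {Q : ι → Matrix V V ℝ} {Q₀ : Matrix V V ℝ}
    (hQ : Tendsto Q f (𝓝 Q₀)) (hQ₀ : IsUnit Q₀.det) {x : ι → V → ℝ} {b : V → ℝ}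
    (hx : ∀ᶠ t in f, Q t *ᵥ x t = b) : Tendsto x f (𝓝 (Q₀⁻¹ *ᵥ b)) := by
  have hdet : ∀ᶠ t in f, (Q t).det ≠ 0 :=
    ((Continuous.matrix_det continuous_id).tendsto Q₀ |>.comp hQ).eventually_ne hQ₀.ne_zero
  have hinv : Tendsto (fun t => (Q t)⁻¹) f (𝓝 Q₀⁻¹) :=
    (continuousAt_matrix_inv Q₀ (NormedRing.inverse_continuousAt hQ₀.unit)).tendsto.comp hQ
  have hmul : Continuous fun M : Matrix V V ℝ => M *ᵥ b := by fun_prop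
  refine ((hmul.tendsto _).comp hinv).congr' ?_
  filter_upwards [hdet, hx] with t ht hxt
  rw [Function.comp_apply, ← hxt, mulVec_mulVec, nonsing_inv_mul _ ht.isUnit, one_mulVec]

end LinearSystem

section RootedTree

variable {V : Type*} {T : SimpleGraph V}

lemma existsUnique_adj_dist_eq_add_one (hT : T.IsTree) {i j : V} (hji : j ≠ i) :
    ∃! l, T.Adj j l ∧ T.dist i j = T.dist i l + 1 := by
  obtain ⟨p, hp, hlen⟩ := hT.connected.exists_path_of_dist i j
  have hnil : ¬p.Nil := fun h => hji h.eq.symm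
  have hadj := (p.adj_penultimate hnil).symm
  have hle : T.dist i p.penultimate ≤ p.length - 1 := by
    simpa using SimpleGraph.dist_le p.dropLast
  have hpos := SimpleGraph.Walk.not_nil_iff_lt_length.1 hnil
  refine ⟨p.penultimate, ⟨hadj, ?_⟩, ?_⟩
  · rcases hT.dist_eq_dist_add_one_of_adj i hadj with h | h <;> omega
  · rintro l ⟨hl, hdist⟩
    obtain ⟨w, hw⟩ := hT.connected.exists_walk_length_eq_dist i l
    have hpath : (w.concat hl.symm).IsPath :=
      SimpleGraph.Walk.isPath_of_length_eq_dist _ (by simp [hw, hdist])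
    simpa using congrArg SimpleGraph.Walk.penultimate ((hT.existsUnique_path i j).unique hpath hp)

open Classical in
/-- The matrix sending a vertex of the tree `T` rooted at `i` to its parent; the row of the root
is zero. -/
noncomputable def parentMatrix (T : SimpleGraph V) (i : V) : Matrix V V ℝ :=
  of fun j l => if T.Adj j l ∧ T.dist i j = T.dist i l + 1 then 1 else 0

lemma dist_lt_of_parentMatrix_ne_zero {i j l : V} (h : parentMatrix T i j l ≠ 0) :
    T.dist i l < T.dist i j := by
  by_contra hlt
  exact h (if_neg fun hparent => hlt (by omega))

variable [Fintype V]

lemma exists_parentMatrix_mulVec_eq (hT : T.IsTree) {i j : V} (hji : j ≠ i) (x : V → ℝ) :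
    ∃ l, T.dist i j = T.dist i l + 1 ∧ (parentMatrix T i *ᵥ x) j = x l := by
  obtain ⟨l, hl, hunique⟩ := existsUnique_adj_dist_eq_add_one hT hji
  refine ⟨l, hl.2, ?_⟩
  simp only [mulVec, dotProduct, parentMatrix, of_apply, ite_mul, one_mul, zero_mul]
  rw [Finset.sum_eq_single_of_mem l (Finset.mem_univ l), if_pos hl]
  exact fun l' _ hne => if_neg fun hl' => hne (hunique l' hl')

lemma parentMatrix_mulVec_root (i : V) (x : V → ℝ) : (parentMatrix T i *ᵥ x) i = 0 := by
  simp [mulVec, dotProduct, parentMatrix]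

variable [DecidableEq V]

lemma ne_zero_of_diagonal_sub_parentMatrix_mulVec_eq (hT : T.IsTree) {i : V} {δ x : V → ℝ}
    (hx : (diagonal δ - parentMatrix T i) *ᵥ x = Pi.single i 1) (j : V) : x j ≠ 0 := by
  have hrow : ∀ j, δ j * x j - (parentMatrix T i *ᵥ x) j = (Pi.single i 1 : V → ℝ) j := fun j => by
    rw [← hx, sub_mulVec, Pi.sub_apply, mulVec_diagonal]
  suffices ∀ n j, T.dist i j = n → x j ≠ 0 from this _ j rfl
  intro n
  induction n with
  | zero =>
    intro j hj hxj
    obtain rfl : i = j := hT.connected.dist_eq_zero_iff.1 hj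
    simpa [hxj, parentMatrix_mulVec_root] using hrow i
  | succ n ih =>
    intro j hj hxj
    have hji : j ≠ i := by
      rintro rfl
      simp at hj
    obtain ⟨l, hl, hparent⟩ := exists_parentMatrix_mulVec_eq hT hji x
    have := hrow j
    rw [hxj, hparent, Pi.single_eq_of_ne hji, mul_zero, zero_sub, neg_eq_zero] at this
    exact ih l (by omega) this

/-- The conjugate of `M` by the diagonal matrix with entries `e ^ T.dist i j`, the expected order
of magnitude of the entries of an eigenvector localised at `i`. -/
noncomputable def distScaled (T : SimpleGraph V) (i : V) (e : ℝ) (M : Matrix V V ℝ) :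
    Matrix V V ℝ :=
  of fun j l => M j l * (e ^ T.dist i l / e ^ T.dist i j)

lemma diagonal_sub_distScaled_mulVec {i : V} {e : ℝ} (he : e ≠ 0) {M : Matrix V V ℝ}
    {d z : V → ℝ} {μ : ℝ} (hz : (diagonal d + M) *ᵥ z = μ • z) (hzi : z i = 1) :
    (diagonal (fun j => μ - d j + (Pi.single i 1 : V → ℝ) j) - distScaled T i e M) *ᵥ
      (fun j => z j / e ^ T.dist i j) = Pi.single i 1 := by
  ext j
  have hrow : d j * z j + ∑ l, M j l * z l = μ * z j := by
    have := congrFun hz j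
    rwa [add_mulVec, Pi.add_apply, mulVec_diagonal] at this
  have hscaled : (distScaled T i e M *ᵥ fun j => z j / e ^ T.dist i j) j =
      (∑ l, M j l * z l) / e ^ T.dist i j := by
    rw [mulVec, dotProduct, Finset.sum_div]
    refine Finset.sum_congr rfl fun l _ => ?_
    simp only [distScaled, of_apply]
    field_simp
  rw [sub_mulVec, Pi.sub_apply, mulVec_diagonal, hscaled, eq_sub_of_add_eq' hrow]
  obtain rfl | hji := eq_or_ne j i
  · simp [hzi]
  · simp only [Pi.single_eq_of_ne hji]
    ring

lemma eventually_eigenvector_ne_zero (hT : T.IsTree) {i : V} {lam : V → ℝ}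
    (hlam : Function.Injective lam) {E : ℝ → Matrix V V ℝ} {d z : ℝ → V → ℝ}
    (hE : Tendsto (fun e => distScaled T i e (E e)) (𝓝[>] 0) (𝓝 (parentMatrix T i)))
    (hd : Tendsto d (𝓝[>] 0) (𝓝 lam)) (hzi : ∀ e, z e i = 1)
    (hz : ∀ᶠ e in 𝓝[>] 0, (diagonal (d e) + E e) *ᵥ z e = lam i • z e) (j : V) :
    ∀ᶠ e in 𝓝[>] 0, z e j ≠ 0 := by
  set δ : (V → ℝ) → V → ℝ := fun d j => lam i - d j + (Pi.single i 1 : V → ℝ) j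
  have hδ : ∀ j, δ lam j ≠ 0 := by
    intro j
    obtain rfl | hji := eq_or_ne j i
    · simp [δ]
    · simpa [δ, hji, sub_eq_zero] using hlam.ne hji.symm
  have hQ : Tendsto (fun e => diagonal (δ (d e)) - distScaled T i e (E e)) (𝓝[>] 0)
      (𝓝 (diagonal (δ lam) - parentMatrix T i)) := by
    have hcont : Continuous fun d : V → ℝ => diagonal (δ d) := by fun_prop
    exact ((hcont.tendsto lam).comp hd).sub hE
  have hdet := isUnit_det_diagonal_sub_of_rank_lt hδ (T.dist i)
    fun j l => dist_lt_of_parentMatrix_ne_zero (T := T)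
  have hsolution : ∀ᶠ e in 𝓝[>] 0, (diagonal (δ (d e)) - distScaled T i e (E e)) *ᵥ
      (fun j => z e j / e ^ T.dist i j) = Pi.single i 1 := by
    filter_upwards [hz, self_mem_nhdsWithin] with e heig hpos
    exact diagonal_sub_distScaled_mulVec (ne_of_gt hpos) heig (hzi e)
  have hlimit := tendsto_pi_nhds.1 (tendsto_of_mulVec_eq hQ hdet hsolution) j
  have hlimit_ne := ne_zero_of_diagonal_sub_parentMatrix_mulVec_eq hT
    (x := (diagonal (δ lam) - parentMatrix T i)⁻¹ *ᵥ Pi.single i 1)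
    (by rw [mulVec_mulVec, mul_nonsing_inv _ hdet, one_mulVec]) j
  filter_upwards [hlimit.eventually_ne hlimit_ne] with e he hzero
  simp [hzero] at he

end RootedTree

section Realisation

variable {V : Type*} [Fintype V] {G T : SimpleGraph V}

open Classical in
/-- A matrix with the off-diagonal pattern of `G ≥ T` whose entries outside the spanning tree `T`
are of higher order in `e` than any path in `T`. -/
noncomputable def treePerturbation (G T : SimpleGraph V) (e : ℝ) : Matrix V V ℝ :=
  of fun i j => if T.Adj i j then e else if G.Adj i j then e ^ Fintype.card V else 0

lemma tendsto_treePerturbation_zero (G T : SimpleGraph V) :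
    Tendsto (treePerturbation G T) (𝓝[>] 0) (𝓝 0) := by
  have hcont : Continuous (treePerturbation G T) := by
    refine continuous_matrix fun i j => ?_
    simp only [treePerturbation, of_apply]
    split_ifs <;> fun_prop
  have hzero : treePerturbation G T 0 = 0 := by
    ext i j
    have : Nonempty V := ⟨i⟩
    simp [treePerturbation]
  simpa [hzero] using (hcont.tendsto 0).mono_left nhdsWithin_le_nhds

lemma inS_diagonal_add_treePerturbation [DecidableEq V] (hTG : T ≤ G) {e : ℝ} (he : e ≠ 0)
    (d : V → ℝ) : inS G (diagonal d + treePerturbation G T e) := by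
  have hsymm : (treePerturbation G T e).IsSymm := by
    classical
    exact IsSymm.ext fun i j =>
      if_congr (T.adj_comm j i) rfl (if_congr (G.adj_comm j i) rfl rfl)
  refine ⟨(isSymm_diagonal d).add hsymm, fun i j hij => ?_⟩
  rw [Matrix.add_apply, diagonal_apply_ne _ hij, zero_add, treePerturbation, of_apply]
  split_ifs with hT hG
  · simp [he, hTG hT]
  · simp [he, hG]
  · simp [hG]

lemma dist_lt_card (hT : T.Connected) (i j : V) : T.dist i j < Fintype.card V := by
  obtain ⟨p, hp, hlen⟩ := hT.exists_path_of_dist i j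
  exact hlen ▸ hp.length_lt

lemma tendsto_distScaled_treePerturbation (G : SimpleGraph V) (hT : T.IsTree) (i : V) :
    Tendsto (fun e => distScaled T i e (treePerturbation G T e)) (𝓝[>] 0)
      (𝓝 (parentMatrix T i)) := by
  have tendsto_pow : ∀ n ≠ 0, Tendsto (fun e : ℝ => e ^ n) (𝓝[>] 0) (𝓝 0) := fun n hn => by
    simpa [hn] using ((continuous_pow n).tendsto (0 : ℝ)).mono_left nhdsWithin_le_nhds
  have hpos : ∀ᶠ e : ℝ in 𝓝[>] 0, 0 < e := self_mem_nhdsWithin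
  refine tendsto_pi_nhds.2 fun j => tendsto_pi_nhds.2 fun l => ?_
  simp only [distScaled, treePerturbation, parentMatrix, of_apply]
  by_cases hjl : T.Adj j l
  · rcases hT.dist_eq_dist_add_one_of_adj i hjl with hparent | hchild
    · simp only [hjl, hparent, and_self, if_true]
      refine tendsto_const_nhds.congr' (hpos.mono fun e he => ?_)
      field_simp
      ring
    · have hnot : ¬T.dist i j = T.dist i l + 1 := by omega
      simp only [hjl, hnot, and_false, if_true, if_false]
      refine (tendsto_pow 2 two_ne_zero).congr' (hpos.mono fun e he => ?_)
      rw [hchild]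
      field_simp
      ring
  · simp only [hjl, false_and, if_false]
    split_ifs
    · have hlt := dist_lt_card hT.connected i j
      refine (tendsto_pow (Fintype.card V - T.dist i j + T.dist i l) (by omega)).congr'
        (hpos.mono fun e he => ?_)
      rw [pow_add, pow_sub₀ e he.ne' hlt.le]
      ring
    · simp

variable [DecidableEq V]

/-- The orthogonal matrix `U` has no zero entries and its columns are eigenvectors, with
eigenvalues `lam`, of a matrix in `S(G)`. -/
def IsNowhereZeroRealisation (G : SimpleGraph V) (lam : V → ℝ) (U : Matrix V V ℝ) : Prop :=
  U ∈ orthogonalGroup V ℝ ∧ inS G (U * diagonal lam * Uᵀ) ∧ ∀ i j, U i j ≠ 0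

theorem frequently_isNowhereZeroRealisation (hG : G.Connected) {lam : V → ℝ}
    (hlam : Function.Injective lam) :
    ∃ᶠ U in 𝓝 (1 : Matrix V V ℝ), IsNowhereZeroRealisation G lam U := by
  obtain ⟨T, hTG, hT⟩ := hG.exists_isTree_le
  obtain ⟨d, Z, hd, hZ, hZdiag, hZeig⟩ := exists_eigenvectorMatrix_perturbation hlam
  set E := treePerturbation G T
  have hE : Tendsto E (𝓝[>] 0) (𝓝 0) := tendsto_treePerturbation_zero G T
  have heig : ∀ᶠ e in 𝓝[>] 0,
      (diagonal (d (E e)) + E e) * Z (E e) = Z (E e) * diagonal lam := hE.eventually hZeig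
  have hcol : ∀ i, ∀ᶠ e in 𝓝[>] 0,
      (diagonal (d (E e)) + E e) *ᵥ (fun j => Z (E e) j i) = lam i • fun j => Z (E e) j i := by
    intro i
    filter_upwards [heig] with e he
    ext j
    have := congrFun (congrFun he j) i
    rwa [mul_diagonal, mul_comm _ (lam i)] at this
  have hne : ∀ᶠ e in 𝓝[>] 0, ∀ i j, Z (E e) j i ≠ 0 :=
    eventually_all.2 fun i => eventually_all.2 fun j =>
      eventually_eigenvector_ne_zero (z := fun e j => Z (E e) j i) hT hlam
        (tendsto_distScaled_treePerturbation G hT i) (hd.comp hE)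
        (fun e => hZdiag (E e) i) (hcol i) j
  have hU : Tendsto (fun e => normalizeCols (Z (E e))) (𝓝[>] 0) (𝓝 1) :=
    tendsto_normalizeCols_one.comp (hZ.comp hE)
  refine hU.frequently (Eventually.frequently ?_)
  filter_upwards [heig, hne, self_mem_nhdsWithin] with e heig hne hpos
  have hS : inS G (diagonal (d (E e)) + E e) :=
    inS_diagonal_add_treePerturbation hTG (ne_of_gt hpos) _
  have hcols : ∀ i, ∃ j, Z (E e) j i ≠ 0 := fun i => ⟨i, hne i i⟩
  refine ⟨normalizeCols_mem_orthogonalGroup hS.1 hlam heig hcols, ?_,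
    fun j i => normalizeCols_apply_ne_zero (hne i j)⟩
  rwa [normalizeCols_mul_diagonal_mul_transpose hS.1 hlam heig hcols]

lemma exists_mem_orthogonalGroup_forall_ne_zero (V : Type*) [Fintype V] [DecidableEq V]
    [Nonempty V] : ∃ W ∈ orthogonalGroup V ℝ, ∀ i j, W i j ≠ 0 := by
  have index_injective : Function.Injective fun i : V => (Fintype.equivFin V i : ℝ) :=
    fun i j hij => by simpa [Fin.val_inj] using hij
  obtain ⟨W, horth, -, hne⟩ :=
    (frequently_isNowhereZeroRealisation SimpleGraph.connected_top index_injective).exists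
  exact ⟨W, horth, hne⟩

end Realisation

section PrescribedEigenvalues

lemma exists_injective_sq_lt_one {β : Type*} [Finite β] (b₀ : β) :
    ∃ θ : β → ℝ, Function.Injective θ ∧ θ b₀ = 0 ∧ ∀ b, θ b ^ 2 < 1 := by
  set index := Finite.equivFin β
  have : Nonempty β := ⟨b₀⟩
  have hcard : (0 : ℝ) < Nat.card β := by exact_mod_cast Nat.card_pos
  refine ⟨fun b => ((index b : ℝ) - index b₀) / Nat.card β, fun b b' h => ?_, by simp,
    fun b => ?_⟩
  · simpa [div_left_inj' hcard.ne', Fin.val_inj] using h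
  · have hlt : ∀ c, (index c : ℝ) < Nat.card β := fun c => by exact_mod_cast (index c).2
    have hb := hlt b
    have hb₀ := hlt b₀
    have hnonneg : ∀ c, (0 : ℝ) ≤ index c := fun c => Nat.cast_nonneg _
    rw [sq_lt_one_iff_abs_lt_one, abs_div, abs_of_pos hcard, div_lt_one hcard, abs_lt]
    constructor <;> linarith [hnonneg b, hnonneg b₀]

lemma exists_injective_extension_of_card_le {α β : Type*} [Fintype α] [Fintype β]
    (hle : Fintype.card β ≤ Fintype.card α) (hle_add : Fintype.card α ≤ Fintype.card β + 2)
    {θ : β → ℝ} (hθ : Function.Injective θ) (hθ_lt : ∀ b, θ b ^ 2 < 1) :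
    ∃ (f : β ↪ α) (lam : α → ℝ), Function.Injective lam ∧ (∀ b, lam (f b) = θ b) ∧
      ∀ a ∉ Set.range f, lam a ^ 2 = 1 := by
  obtain ⟨e⟩ : Nonempty (α ≃ β ⊕ Fin (Fintype.card α - Fintype.card β)) :=
    Fintype.card_eq.1 (by simp [hle])
  obtain ⟨sign⟩ : Nonempty (Fin (Fintype.card α - Fintype.card β) ↪ ℤˣ) :=
    Function.Embedding.nonempty_of_card_le (by
      rw [Fintype.card_fin, Fintype.card_units_int]
      omega)
  set ε : Fin (Fintype.card α - Fintype.card β) → ℝ := fun c => ((sign c : ℤ) : ℝ)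
  have hε : ∀ c, ε c ^ 2 = 1 := fun c => by
    rcases Int.units_eq_one_or (sign c) with h | h <;> simp [ε, h]
  have hinj : Function.Injective (Sum.elim θ ε) := by
    refine hθ.sumElim (fun c c' h => ?_) fun b c h => ?_
    · exact sign.injective (Units.ext (Int.cast_injective h))
    · exact (hθ_lt b).ne (h ▸ hε c)
  refine ⟨Function.Embedding.inl.trans e.symm.toEmbedding, Sum.elim θ ε ∘ e,
    hinj.comp e.injective, fun b => by simp, fun a ha => ?_⟩
  rcases h : e a with b | c
  · exact absurd ⟨b, by simp [← h]⟩ ha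
  · simpa [h] using hε c

end PrescribedEigenvalues

section RectDiagonal

variable {R α β : Type*} [CommRing R] [DecidableEq α]

/-- The rectangular diagonal matrix with entry `s b` at position `(f b, b)`, which pairs the
eigenvector `b` of one block with the eigenvector `f b` of the other. -/
def rectDiagonal (f : β → α) (s : β → R) : Matrix α β R :=
  of fun a b => if a = f b then s b else 0

lemma mul_rectDiagonal_apply {γ : Type*} [Fintype α] (M : Matrix γ α R) (f : β → α) (s : β → R)
    (c : γ) (b : β) : (M * rectDiagonal f s) c b = M c (f b) * s b := by
  simp [mul_apply, rectDiagonal]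

variable [Fintype α] [Fintype β] [DecidableEq β]

lemma fromBlocks_diagonal_rectDiagonal_mul_self {f : β → α} (hf : Function.Injective f)
    {lam : α → R} {s : β → R} (hs : ∀ b, lam (f b) ^ 2 + s b ^ 2 = 1)
    (hlam : ∀ a ∉ Set.range f, lam a ^ 2 = 1) :
    fromBlocks (diagonal lam) (rectDiagonal f s) (rectDiagonal f s)ᵀ (diagonal (-(lam ∘ f))) *
      fromBlocks (diagonal lam) (rectDiagonal f s) (rectDiagonal f s)ᵀ (diagonal (-(lam ∘ f))) =
        1 := by
  refine (fromBlocks_mul_self_eq_one_iff (isSymm_diagonal _) (isSymm_diagonal _)).2 ⟨?_, ?_, ?_⟩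
  · ext a a'
    rw [Matrix.add_apply, diagonal_mul_diagonal, mul_apply]
    by_cases ha : a ∈ Set.range f
    · obtain ⟨b, rfl⟩ := ha
      obtain rfl | hne := eq_or_ne (f b) a'
      · simpa [rectDiagonal, hf.eq_iff, sq] using hs b
      · have hrow : ∀ j, rectDiagonal f s (f b) j * rectDiagonal f s a' j = 0 := fun j => by
          obtain rfl | hj := eq_or_ne b j
          · simp [rectDiagonal, hne.symm]
          · simp [rectDiagonal, hf.eq_iff, hj]
        simp [hrow, hne]
    · have hrow : ∀ b, rectDiagonal f s a b = 0 := fun b => if_neg fun h => ha ⟨b, h.symm⟩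
      simp [hrow, diagonal_apply, one_apply, ← sq, hlam a ha]
  · ext a b
    by_cases h : a = f b <;>
      simp [rectDiagonal, h, mul_comm]
  · ext b b'
    rw [Matrix.add_apply, mul_rectDiagonal_apply, diagonal_mul_diagonal]
    obtain rfl | hne := eq_or_ne b b'
    · simpa [rectDiagonal, ← sq, add_comm] using hs b
    · simp [rectDiagonal, hne, hf.eq_iff, hne.symm]

end RectDiagonal

section Seed

variable {α β : Type*} [Fintype α] [Fintype β] [DecidableEq α] [DecidableEq β]
  {G : SimpleGraph α} {H : SimpleGraph β} {w : ℝ} {A : Matrix α α ℝ} {B : Matrix α β ℝ}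
  {C : Matrix β β ℝ} {u : Matrix α Unit ℝ} {v : Matrix β Unit ℝ}

/-- The contribution of one pair of components to the join: a symmetric involution with diagonal
blocks in `S(G)` and `S(H)`, together with a unit vector `u` in the kernel of the first block, which
`Bᵀ` maps to `v`. The rank one update of `B` in the last field is what remains of the off-diagonal
block after the pairs have been coupled along the vectors `u`, with `w` the diagonal entry of the
coupling matrix. The vectors are one-column matrices so that `blockDiagonal'` can collect them. -/
structure IsJoinSeed (G : SimpleGraph α) (H : SimpleGraph β) (w : ℝ) (A : Matrix α α ℝ)
    (B : Matrix α β ℝ) (C : Matrix β β ℝ) (u : Matrix α Unit ℝ) (v : Matrix β Unit ℝ) : Prop where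
  inS_left : inS G A
  inS_right : inS H C
  mul_self : fromBlocks A B Bᵀ C * fromBlocks A B Bᵀ C = 1
  left_mul : A * u = 0
  transpose_mul : Bᵀ * u = v
  transpose_mul_self : uᵀ * u = 1
  left_ne_zero : ∀ a, u a () ≠ 0
  right_ne_zero : ∀ b, v b () ≠ 0
  coupled_ne_zero : ∀ a b, B a b + (w - 1) * (u a () * v b ()) ≠ 0

lemma IsJoinSeed.swap (h : IsJoinSeed G H w A B C u v) : IsJoinSeed H G w C Bᵀ A v u := by
  obtain ⟨hAA, hAB, hCC⟩ := (fromBlocks_mul_self_eq_one_iff h.inS_left.1 h.inS_right.1).1 h.mul_self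
  have hCB : C * Bᵀ = -(Bᵀ * A) := by
    rw [eq_neg_iff_add_eq_zero, add_comm, ← transpose_inj]
    simpa [h.inS_left.1.eq, h.inS_right.1.eq] using hAB
  have hBv : B * v = u := by
    rw [← h.transpose_mul, ← Matrix.mul_assoc, eq_sub_of_add_eq' hAA, Matrix.sub_mul,
      Matrix.mul_assoc, h.left_mul, Matrix.one_mul, Matrix.mul_zero, sub_zero]
  refine ⟨h.inS_right, h.inS_left, ?_, ?_, ?_, ?_, h.right_ne_zero, h.left_ne_zero, fun b a => ?_⟩
  · refine (fromBlocks_mul_self_eq_one_iff h.inS_right.1 h.inS_left.1).2 ⟨?_, ?_, ?_⟩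
    · rwa [transpose_transpose, add_comm]
    · rw [hCB, neg_add_cancel]
    · rwa [transpose_transpose, add_comm]
  · rw [← h.transpose_mul, ← Matrix.mul_assoc, hCB, Matrix.neg_mul, Matrix.mul_assoc, h.left_mul,
      Matrix.mul_zero, neg_zero]
  · rw [transpose_transpose, hBv]
  · have hv : vᵀ = uᵀ * B := by
      rw [← h.transpose_mul, Matrix.transpose_mul, transpose_transpose]
    rw [hv, Matrix.mul_assoc, hBv, h.transpose_mul_self]
  · simpa [mul_comm (v b ())] using h.coupled_ne_zero a b

lemma isJoinSeed_of_isNowhereZeroRealisation {f : β → α} (hf : Function.Injective f)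
    {lam : α → ℝ} {s : β → ℝ} {U : Matrix α α ℝ} {V : Matrix β β ℝ}
    (hU : IsNowhereZeroRealisation G lam U) (hV : IsNowhereZeroRealisation H (-(lam ∘ f)) V)
    (hs : ∀ b, lam (f b) ^ 2 + s b ^ 2 = 1) (hlam : ∀ a ∉ Set.range f, lam a ^ 2 = 1)
    {b₀ : β} (hlam₀ : lam (f b₀) = 0) (hs₀ : s b₀ = 1)
    (hUV : ∀ a b, (U * rectDiagonal f (Function.update s b₀ w) * Vᵀ) a b ≠ 0) :
    IsJoinSeed G H w (U * diagonal lam * Uᵀ) (U * rectDiagonal f s * Vᵀ)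
      (V * diagonal (-(lam ∘ f)) * Vᵀ) (U.submatrix id fun _ => f b₀)
      (V.submatrix id fun _ => b₀) := by
  have transpose_mul_col : Uᵀ * U.submatrix id (fun _ : Unit => f b₀) =
      (1 : Matrix α α ℝ).submatrix id fun _ => f b₀ := by
    rw [← (mem_orthogonalGroup_iff' _ _).1 hU.1]
    rfl
  refine ⟨hU.2.1, hV.2.1, ?_, ?_, ?_, ?_, fun a => hU.2.2 a _, fun b => hV.2.2 b _, fun a b => ?_⟩
  · exact fromBlocks_mul_self_eq_one_of_orthogonal
      (fromBlocks_diagonal_rectDiagonal_mul_self hf hs hlam) hU.1 hV.1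
  · rw [Matrix.mul_assoc, transpose_mul_col]
    ext a x
    simp [mul_apply, one_apply, diagonal_apply, hlam₀]
  · rw [transpose_mul, transpose_transpose, transpose_mul, Matrix.mul_assoc, Matrix.mul_assoc,
      transpose_mul_col]
    ext b x
    simp [mul_apply, one_apply, rectDiagonal, hf.eq_iff, hs₀]
  · ext x y
    have := congrFun (congrFun transpose_mul_col (f b₀)) ()
    simpa [mul_apply, one_apply] using this
  · convert hUV a b using 1
    rw [Matrix.mul_apply (N := Vᵀ), Matrix.mul_apply (N := Vᵀ)]
    simp only [mul_rectDiagonal_apply, transpose_apply, submatrix_apply, id]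
    rw [eq_comm, ← sub_eq_iff_eq_add', ← Finset.sum_sub_distrib, Finset.sum_eq_single b₀]
    · rw [Function.update_self, hs₀]
      ring
    · intro b' _ hb'
      simp [hb']
    · simp

lemma exists_isJoinSeed_of_card_le (hG : G.Connected) (hH : H.Connected)
    (hle : Fintype.card β ≤ Fintype.card α) (hle_add : Fintype.card α ≤ Fintype.card β + 2)
    (hw : w ≠ 0) : ∃ A B C u v, IsJoinSeed G H w A B C u v := by
  obtain ⟨b₀⟩ := hH.nonempty
  obtain ⟨θ, hθ, hθ₀, hθ_lt⟩ := exists_injective_sq_lt_one b₀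
  obtain ⟨f, lam, hlam, hlamf, hlam_sq⟩ :=
    exists_injective_extension_of_card_le hle hle_add hθ hθ_lt
  set s : β → ℝ := fun b => √(1 - θ b ^ 2)
  have hs_ne : ∀ b, Function.update s b₀ w b ≠ 0 := by
    intro b
    obtain rfl | hne := eq_or_ne b b₀
    · simpa using hw
    · simpa [hne, s] using Real.sqrt_ne_zero'.2 (sub_pos.2 (hθ_lt b))
  have hs : ∀ b, lam (f b) ^ 2 + s b ^ 2 = 1 := fun b => by
    rw [hlamf, Real.sq_sqrt (sub_nonneg.2 (hθ_lt b).le)]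
    ring
  obtain ⟨U, hU⟩ := (frequently_isNowhereZeroRealisation hG hlam).exists
  have hUV : ∀ᶠ V in 𝓝 (1 : Matrix β β ℝ),
      ∀ a b, (U * rectDiagonal f (Function.update s b₀ w) * Vᵀ) a b ≠ 0 := by
    refine eventually_all.2 fun a => eventually_all.2 fun b => ?_
    have hcont : Continuous fun V : Matrix β β ℝ =>
        (U * rectDiagonal f (Function.update s b₀ w) * Vᵀ) a b := by fun_prop
    refine (hcont.tendsto 1).eventually_ne ?_
    rw [transpose_one, Matrix.mul_one, mul_rectDiagonal_apply]
    exact mul_ne_zero (hU.2.2 a _) (hs_ne b)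
  obtain ⟨V, hV, hUV⟩ := ((frequently_isNowhereZeroRealisation hH (lam := -(lam ∘ f))
    (neg_injective.comp (hlam.comp f.injective))).and_eventually hUV).exists
  exact ⟨_, _, _, _, _, isJoinSeed_of_isNowhereZeroRealisation f.injective hU hV hs hlam_sq
    (by rw [hlamf, hθ₀]) (by simp [s, hθ₀]) hUV⟩

lemma exists_isJoinSeed (hG : G.Connected) (hH : H.Connected)
    (hcard : Fintype.card α ≤ Fintype.card β + 2 ∧ Fintype.card β ≤ Fintype.card α + 2)
    (hw : w ≠ 0) : ∃ A B C u v, IsJoinSeed G H w A B C u v := by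
  rcases le_total (Fintype.card β) (Fintype.card α) with hle | hle
  · exact exists_isJoinSeed_of_card_le hG hH hle hcard.1 hw
  · obtain ⟨A, B, C, u, v, hseed⟩ := exists_isJoinSeed_of_card_le hH hG hle hcard.2 hw
    exact ⟨C, Bᵀ, A, v, u, hseed.swap⟩

end Seed

section Coupling

variable {R ι : Type*} [Fintype ι] [DecidableEq ι] {α β : ι → Type*}

lemma blockDiagonal'_mul_mul_blockDiagonal'_apply [NonUnitalSemiring R] {γ δ : ι → Type*}
    [∀ i, Fintype (γ i)] [∀ i, Fintype (δ i)] (M : ∀ i, Matrix (α i) (γ i) R)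
    (X : Matrix (Σ i, γ i) (Σ i, δ i) R) (N : ∀ i, Matrix (δ i) (β i) R) (i j : ι) (a : α i)
    (b : β j) : (blockDiagonal' M * X * blockDiagonal' N) ⟨i, a⟩ ⟨j, b⟩ =
      (M i * X.submatrix (Sigma.mk i) (Sigma.mk j) * N j) a b := by
  simp only [Matrix.mul_apply, Fintype.sum_sigma, submatrix_apply]
  rw [Fintype.sum_eq_single j fun l hl => by simp [blockDiagonal'_apply_ne _ _ _ hl]]
  refine Finset.sum_congr rfl fun d _ => ?_
  rw [blockDiagonal'_apply_eq,
    Fintype.sum_eq_single i fun l hl => by simp [blockDiagonal'_apply_ne _ _ _ hl.symm]]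
  simp only [blockDiagonal'_apply_eq]

variable [∀ i, Fintype (α i)] [∀ i, Fintype (β i)] [∀ i, DecidableEq (α i)]
  [∀ i, DecidableEq (β i)]

lemma fromBlocks_blockDiagonal'_mul_self [CommRing R] {A : ∀ i, Matrix (α i) (α i) R}
    {B : ∀ i, Matrix (α i) (β i) R} {C : ∀ i, Matrix (β i) (β i) R} (hA : ∀ i, (A i).IsSymm)
    (hC : ∀ i, (C i).IsSymm)
    (h : ∀ i, fromBlocks (A i) (B i) (B i)ᵀ (C i) * fromBlocks (A i) (B i) (B i)ᵀ (C i) = 1) :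
    fromBlocks (blockDiagonal' A) (blockDiagonal' B) (blockDiagonal' B)ᵀ (blockDiagonal' C) *
      fromBlocks (blockDiagonal' A) (blockDiagonal' B) (blockDiagonal' B)ᵀ (blockDiagonal' C) =
        1 := by
  have blocks := fun i => (fromBlocks_mul_self_eq_one_iff (hA i) (hC i)).1 (h i)
  refine (fromBlocks_mul_self_eq_one_iff ?_ ?_).2 ⟨?_, ?_, ?_⟩
  · rw [Matrix.IsSymm, blockDiagonal'_transpose]
    exact congrArg _ (funext hA)
  · rw [Matrix.IsSymm, blockDiagonal'_transpose]
    exact congrArg _ (funext hC)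
  · rw [blockDiagonal'_transpose, ← blockDiagonal'_mul, ← blockDiagonal'_mul,
      ← blockDiagonal'_add, ← blockDiagonal'_one]
    exact congrArg _ (funext fun i => (blocks i).1)
  · rw [← blockDiagonal'_mul, ← blockDiagonal'_mul, ← blockDiagonal'_add, ← blockDiagonal'_zero]
    exact congrArg _ (funext fun i => (blocks i).2.1)
  · rw [blockDiagonal'_transpose, ← blockDiagonal'_mul, ← blockDiagonal'_mul,
      ← blockDiagonal'_add, ← blockDiagonal'_one]
    exact congrArg _ (funext fun i => (blocks i).2.2)

variable {G : ∀ i, SimpleGraph (α i)} {H : ∀ i, SimpleGraph (β i)}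
  {A : ∀ i, Matrix (α i) (α i) ℝ} {B : ∀ i, Matrix (α i) (β i) ℝ} {C : ∀ i, Matrix (β i) (β i) ℝ}
  {u : ∀ i, Matrix (α i) Unit ℝ} {v : ∀ i, Matrix (β i) Unit ℝ}

lemma coupled_apply_ne_zero {W : Matrix (Σ _ : ι, Unit) (Σ _ : ι, Unit) ℝ}
    (hW : ∀ x y, W x y ≠ 0)
    (h : ∀ i, IsJoinSeed (G i) (H i) (W ⟨i, ()⟩ ⟨i, ()⟩) (A i) (B i) (C i) (u i) (v i))
    (x : Σ i, α i) (y : Σ i, β i) :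
    (blockDiagonal' B + blockDiagonal' u * (W - 1) * (blockDiagonal' v)ᵀ :
      Matrix (Σ i, α i) (Σ i, β i) ℝ) x y ≠ 0 := by
  obtain ⟨i, a⟩ := x
  obtain ⟨j, b⟩ := y
  have update : (blockDiagonal' u * (W - 1) * (blockDiagonal' v)ᵀ :
      Matrix (Σ i, α i) (Σ i, β i) ℝ) ⟨i, a⟩ ⟨j, b⟩ =
        (W - 1) ⟨i, ()⟩ ⟨j, ()⟩ * (u i a () * v j b ()) := by
    rw [blockDiagonal'_transpose, blockDiagonal'_mul_mul_blockDiagonal'_apply]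
    simp only [Matrix.mul_apply, Finset.univ_unique, Finset.sum_singleton, submatrix_apply,
      transpose_apply, PUnit.default_eq_unit]
    ring
  rw [Matrix.add_apply, update, Matrix.sub_apply]
  obtain rfl | hij := eq_or_ne i j
  · rw [blockDiagonal'_apply_eq, one_apply_eq]
    exact (h i).coupled_ne_zero a b
  · rw [blockDiagonal'_apply_ne _ _ _ hij, one_apply_ne (by simpa using hij), zero_add, sub_zero]
    exact mul_ne_zero (hW _ _) (mul_ne_zero ((h i).left_ne_zero a) ((h j).right_ne_zero b))

lemma fromBlocks_coupled_mul_self {W : Matrix (Σ _ : ι, Unit) (Σ _ : ι, Unit) ℝ}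
    (hW : W ∈ orthogonalGroup (Σ _ : ι, Unit) ℝ) {w : ι → ℝ}
    (h : ∀ i, IsJoinSeed (G i) (H i) (w i) (A i) (B i) (C i) (u i) (v i)) :
    let E := blockDiagonal' B + blockDiagonal' u * (W - 1) * (blockDiagonal' v)ᵀ
    fromBlocks (blockDiagonal' A) E Eᵀ (blockDiagonal' C) *
      fromBlocks (blockDiagonal' A) E Eᵀ (blockDiagonal' C) = 1 := by
  intro E
  have hAu : blockDiagonal' A * blockDiagonal' u = 0 := by
    rw [← blockDiagonal'_mul, ← blockDiagonal'_zero]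
    exact congrArg _ (funext fun i => (h i).left_mul)
  have huA : (blockDiagonal' u)ᵀ * blockDiagonal' A = 0 := by
    have hA : (blockDiagonal' A)ᵀ = blockDiagonal' A := (inS_sigmaGraph_blockDiagonal'
      fun i => (h i).inS_left).1
    rw [← hA, ← transpose_mul, hAu, transpose_zero]
  have huB : (blockDiagonal' u)ᵀ * blockDiagonal' B = (blockDiagonal' v)ᵀ := by
    rw [← transpose_inj, transpose_mul, transpose_transpose, transpose_transpose,
      blockDiagonal'_transpose, ← blockDiagonal'_mul]
    exact congrArg _ (funext fun i => (h i).transpose_mul)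
  have huu : (blockDiagonal' u)ᵀ * blockDiagonal' u = 1 := by
    rw [blockDiagonal'_transpose, ← blockDiagonal'_mul, ← blockDiagonal'_one]
    exact congrArg _ (funext fun i => (h i).transpose_mul_self)
  set Q := 1 + blockDiagonal' u * (W - 1) * (blockDiagonal' u)ᵀ with hQ
  have hQA : Q * blockDiagonal' A * Qᵀ = blockDiagonal' A := by
    have hQA' : Q * blockDiagonal' A = blockDiagonal' A := by
      rw [hQ, Matrix.add_mul, Matrix.one_mul, Matrix.mul_assoc, huA, Matrix.mul_zero, add_zero]
    rw [hQA', hQ]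
    simp only [transpose_add, transpose_mul, transpose_transpose, transpose_one, Matrix.mul_add,
      Matrix.mul_one, ← Matrix.mul_assoc, hAu, Matrix.zero_mul, add_zero]
  have hQB : Q * blockDiagonal' B = E := by
    rw [hQ, Matrix.add_mul, Matrix.one_mul, Matrix.mul_assoc, huB]
  have := fromBlocks_mul_self_eq_one_of_orthogonal
    (fromBlocks_blockDiagonal'_mul_self (fun i => (h i).inS_left.1) (fun i => (h i).inS_right.1)
      fun i => (h i).mul_self)
    (one_add_mul_sub_one_mul_transpose_mem_orthogonalGroup huu hW) (one_mem (orthogonalGroup _ ℝ))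
  simpa only [← hQ, hQA, hQB, transpose_one, Matrix.mul_one, Matrix.one_mul] using this

end Coupling

theorem statement8_general {ι : Type*} [Fintype ι] [DecidableEq ι] [Nonempty ι] {α β : ι → Type*}
    [∀ i, Fintype (α i)] [∀ i, Fintype (β i)] [∀ i, DecidableEq (α i)] [∀ i, DecidableEq (β i)]
    (G : ∀ i, SimpleGraph (α i)) (H : ∀ i, SimpleGraph (β i)) (hG : ∀ i, (G i).Connected)
    (hH : ∀ i, (H i).Connected)
    (hcard : ∀ i, Fintype.card (α i) ≤ Fintype.card (β i) + 2 ∧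
      Fintype.card (β i) ≤ Fintype.card (α i) + 2) :
    qGraph (graphJoin (sigmaGraph G) (sigmaGraph H)) = 2 := by
  obtain ⟨i₀⟩ := ‹Nonempty ι›
  have : Nonempty (Σ _ : ι, Unit) := ⟨⟨i₀, ()⟩⟩
  obtain ⟨W, hW, hW_ne⟩ := exists_mem_orthogonalGroup_forall_ne_zero (Σ _ : ι, Unit)
  choose A B C u v hseed using fun i =>
    exists_isJoinSeed (hG i) (hH i) (hcard i) (hW_ne ⟨i, ()⟩ ⟨i, ()⟩)
  obtain ⟨a⟩ := (hG i₀).nonempty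
  obtain ⟨b⟩ := (hH i₀).nonempty
  exact qGraph_eq_two_of_mul_self_eq_one (graphJoin_adj_inl_inr _ _ ⟨i₀, a⟩ ⟨i₀, b⟩)
    (inS_graphJoin_fromBlocks (inS_sigmaGraph_blockDiagonal' fun i => (hseed i).inS_left)
      (inS_sigmaGraph_blockDiagonal' fun i => (hseed i).inS_right)
      (coupled_apply_ne_zero hW_ne hseed))
    (fromBlocks_coupled_mul_self hW hseed)

/-- Theorem 3.4, first part: if `G_i`, `H_i` are connected graphs with
`||G_i| − |H_i|| ≤ 2` for each `i ∈ [k]`, then `q((⋃ G_i) ∨ (⋃ H_i)) = 2`. -/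
theorem statement8 (k : ℕ) (hk : 1 ≤ k) (m p : Fin k → ℕ)
    (G : ∀ i, SimpleGraph (Fin (m i))) (H : ∀ i, SimpleGraph (Fin (p i)))
    (hG : ∀ i, (G i).Connected) (hH : ∀ i, (H i).Connected)
    (hdiff : ∀ i, m i ≤ p i + 2 ∧ p i ≤ m i + 2) :
    qGraph (graphJoin (sigmaGraph G) (sigmaGraph H)) = 2 :=
  have : Nonempty (Fin k) := ⟨⟨0, hk⟩⟩
  statement8_general G H hG hH (by simpa using hdiff)
end

section
/- Let T₁ and T₂ be trees. Then q(T₁ ∨ T₂) = 2 if and only if | |T₁| − |T₂| | ≤ 2. -/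
open Matrix Filter

/-
Rescaling turns a matrix with two eigenvalues into an involution, so `q(T₁ ∨ T₂) = 2` asks for a
symmetric `A ∈ S(T₁ ∨ T₂)` with `A² = 1`.

The `T₁`-block `B` of such an `A` satisfies `1 - B² = C Cᵀ`, whose rank is at most `|T₂|`. Both
`1 - B` and `1 + B` are positive semidefinite with the pattern of the tree `T₁`, and a vector in the
kernel of such a matrix which vanishes at one vertex vanishes everywhere. So `1 - B²` has nullity at
most `2`, and `|T₁| ≤ |T₂| + 2`.

Conversely, delete a leaf from each tree and take an involution `A` for the smaller join. The direct
sum of `A` and a reflection `!![μ, s; s, -μ]` is an involution, and the strong spectral property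
allows us to perturb it within its conjugacy class with prescribed entries at the missing edges,
namely those attaching the two leaves to their neighbours. The remaining entries, between one leaf
and the opposite tree, are given by Cramer's rule and are nonzero for generic parameters. The
induction starts at complete graphs and at `K₄` minus an edge.
-/

lemma aeval_eq_zero_of_forall_mem_spectrum {V : Type*} [Fintype V] [DecidableEq V]
    {A : Matrix V V ℝ} (hA : A.IsSymm) {p : Polynomial ℝ}
    (hp : ∀ r ∈ spectrum ℝ A, p.eval r = 0) : Polynomial.aeval A p = 0 := by
  have hA' : IsSelfAdjoint A := (conjTranspose_eq_transpose_of_trivial A).trans hA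
  rw [← cfc_polynomial p A, cfc_congr (g := fun _ => 0) hp, cfc_const_zero]

lemma qMat_eq_ncard_spectrum {V : Type*} [Fintype V] [DecidableEq V] (A : Matrix V V ℝ) :
    qMat A = (spectrum ℝ A).ncard := by
  rw [qMat, ← Set.ncard_coe_finset]
  congr 1
  ext r
  simp [specMultiset, A.charpoly_monic.ne_zero, mem_spectrum_iff_isRoot_charpoly]

lemma two_le_qMat {V : Type*} [Fintype V] [DecidableEq V] {G : SimpleGraph V} (hG : G ≠ ⊥)
    {A : Matrix V V ℝ} (hA : inS G A) : 2 ≤ qMat A := by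
  obtain ⟨v, w, hvw⟩ := SimpleGraph.ne_bot_iff_exists_adj.1 hG
  by_contra! hlt
  rw [qMat_eq_ncard_spectrum] at hlt
  obtain ⟨γ, hγ⟩ := (Set.ncard_le_one_iff_subset_singleton A.finite_spectrum).1
    (Nat.le_of_lt_succ hlt)
  have hscalar : A - algebraMap ℝ _ γ = 0 := by
    simpa using aeval_eq_zero_of_forall_mem_spectrum hA.1 (p := .X - .C γ)
      fun r hr => by simp [Set.mem_singleton_iff.1 (hγ hr)]
  refine (hA.2 v w hvw.ne).2 hvw ?_
  simpa [algebraMap_matrix_apply, hvw.ne] using congrFun₂ hscalar v w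

lemma qMat_le_two_of_mul_self_eq_one_s11 {V : Type*} [Fintype V] [DecidableEq V]
    {A : Matrix V V ℝ} (hA : A * A = 1) : qMat A ≤ 2 := by
  have hspec : spectrum ℝ A ⊆ {1, -1} := by
    intro r hr
    by_contra hr1
    have hd : r ^ 2 - 1 ≠ 0 := by simpa [sub_eq_zero] using hr1
    refine hr (IsUnit.of_mul_eq_one ((r ^ 2 - 1)⁻¹ • (r • 1 + A)) ?_)
    simp only [Algebra.algebraMap_eq_smul_one, mul_smul_comm, mul_add, sub_mul, smul_mul_assoc,
      one_mul, mul_one, hA]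
    match_scalars <;> field_simp <;> ring
  rw [qMat_eq_ncard_spectrum]
  exact (Set.ncard_le_ncard hspec).trans ((Set.ncard_insert_le _ _).trans (by simp))

lemma inS_smul_add_smul_one {V : Type*} [DecidableEq V] {G : SimpleGraph V}
    {A : Matrix V V ℝ} (hA : inS G A) {a : ℝ} (ha : a ≠ 0) (b : ℝ) :
    inS G (a • A + b • 1) :=
  ⟨(hA.1.smul a).add (isSymm_one.smul b), fun i j hij => by simp [hij, ha, hA.2 i j hij]⟩

lemma qGraph_eq_two_iff {V : Type*} [Fintype V] [DecidableEq V] {G : SimpleGraph V}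
    (hG : G ≠ ⊥) : qGraph G = 2 ↔ ∃ A, inS G A ∧ A * A = 1 := by
  constructor
  · intro hq
    obtain ⟨A, hA, hqA⟩ : 2 ∈ {q | ∃ A : Matrix V V ℝ, inS G A ∧ qMat A = q} :=
      hq ▸ Nat.sInf_mem (Nat.nonempty_of_pos_sInf (by rw [← qGraph, hq]; norm_num))
    rw [qMat_eq_ncard_spectrum, Set.ncard_eq_two] at hqA
    obtain ⟨α, β, hαβ, hspec⟩ := hqA
    have hroot : (A - algebraMap ℝ _ α) * (A - algebraMap ℝ _ β) = 0 := by
      simpa using aeval_eq_zero_of_forall_mem_spectrum hA.1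
        (p := (.X - .C α) * (.X - .C β)) fun r hr => by
          rw [hspec] at hr
          rcases hr with rfl | rfl <;> simp
    have hsq : A * A = (α + β) • A - (α * β) • 1 := by
      rw [← sub_eq_zero, ← hroot]
      simp only [Algebra.algebraMap_eq_smul_one, sub_mul, mul_sub, smul_mul_assoc, mul_smul_comm,
        one_mul, mul_one]
      module
    have hd : α - β ≠ 0 := sub_ne_zero.2 hαβ
    refine ⟨(2 / (α - β)) • A + (-(α + β) / (α - β)) • 1,
      inS_smul_add_smul_one hA (by positivity) _, ?_⟩
    simp only [add_mul, mul_add, smul_mul_assoc, mul_smul_comm, one_mul, mul_one, hsq]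
    match_scalars <;> field_simp <;> ring
  · rintro ⟨A, hA, hsq⟩
    have hqA : qMat A = 2 := (qMat_le_two_of_mul_self_eq_one_s11 hsq).antisymm (two_le_qMat hG hA)
    refine IsLeast.csInf_eq (s := {q | ∃ B, inS G B ∧ qMat B = q}) ⟨⟨A, hA, hqA⟩, ?_⟩
    rintro _ ⟨B, hB, rfl⟩
    exact two_le_qMat hG hB

section Join

variable {V V' W W' : Type*}

lemma inS.submatrix {G : SimpleGraph V} {A : Matrix V V ℝ} (hA : inS G A) {f : V' → V}
    (hf : Function.Injective f) : inS (G.comap f) (A.submatrix f f) :=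
  ⟨hA.1.submatrix f, fun _ _ hij => hA.2 _ _ (hf.ne hij)⟩

lemma inS.submatrix_iso {G : SimpleGraph V} {H : SimpleGraph W} (e : G ≃g H)
    {A : Matrix W W ℝ} (hA : inS H A) : inS G (A.submatrix e e) := by
  have hcomap : H.comap e = G := by
    ext v w
    exact e.map_adj_iff
  have hS := hA.submatrix e.injective
  rwa [hcomap] at hS

lemma submatrix_mul_self_eq_one [Fintype V] [DecidableEq V] [Fintype W] [DecidableEq W]
    (e : V ≃ W) {A : Matrix W W ℝ} (hA : A * A = 1) : A.submatrix e e * A.submatrix e e = 1 := by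
  rw [submatrix_mul_equiv, hA, submatrix_one_equiv]

variable (G : SimpleGraph V) (H : SimpleGraph W)

@[simp]
lemma graphJoin_adj_inl_inl {v v' : V} :
    (graphJoin G H).Adj (.inl v) (.inl v') ↔ G.Adj v v' := by
  simp [graphJoin, partialJoin]

@[simp]
lemma graphJoin_adj_inr_inr {w w' : W} :
    (graphJoin G H).Adj (.inr w) (.inr w') ↔ H.Adj w w' := by
  simp [graphJoin, partialJoin]

@[simp]
lemma graphJoin_adj_inl_inr_s11 {v : V} {w : W} : (graphJoin G H).Adj (.inl v) (.inr w) := by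
  simp [graphJoin, partialJoin]

@[simp]
lemma graphJoin_adj_inr_inl {v : V} {w : W} : (graphJoin G H).Adj (.inr w) (.inl v) :=
  (graphJoin_adj_inl_inr_s11 G H).symm

lemma graphJoin_comap_inl : (graphJoin G H).comap Sum.inl = G := by
  ext v v'
  simp

lemma graphJoin_ne_bot [Nonempty V] [Nonempty W] : graphJoin G H ≠ ⊥ :=
  SimpleGraph.ne_bot_iff_exists_adj.2
    ⟨.inl (Classical.arbitrary V), .inr (Classical.arbitrary W), graphJoin_adj_inl_inr_s11 G H⟩

lemma graphJoin_top : graphJoin (⊤ : SimpleGraph V) (⊤ : SimpleGraph W) = ⊤ := by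
  ext (v | w) (v' | w') <;> simp

/-- The join is commutative up to isomorphism. -/
def graphJoinComm : graphJoin G H ≃g graphJoin H G where
  toEquiv := Equiv.sumComm V W
  map_rel_iff' := by rintro (v | w) (v' | w') <;> simp

variable {G H} {G' : SimpleGraph V'} {H' : SimpleGraph W'}

lemma graphJoin_mono {G₁ G₂ : SimpleGraph V} {H₁ H₂ : SimpleGraph W} (hG : G₁ ≤ G₂)
    (hH : H₁ ≤ H₂) : graphJoin G₁ H₁ ≤ graphJoin G₂ H₂ := by
  rintro (v | w) (v' | w')
  · simpa using @hG v v'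
  · simp
  · simp
  · simpa using @hH w w'

/-- The join respects isomorphisms. -/
def graphJoinCongr (e : G ≃g G') (f : H ≃g H') : graphJoin G H ≃g graphJoin G' H' where
  toEquiv := Equiv.sumCongr e.toEquiv f.toEquiv
  map_rel_iff' := by rintro (v | w) (v' | w') <;> simp [e.map_adj_iff, f.map_adj_iff]

end Join

section Necessity

variable {V W : Type*} [Fintype V] [Fintype W]

lemma eq_zero_of_posSemidef_of_cut {M : Matrix V V ℝ} (hM : M.PosSemidef) {x : V → ℝ}
    (hx : M *ᵥ x = 0) {S : Set V} {v w : V} (hw : w ∈ S) (hv : v ∉ S)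
    (hcut : ∀ i ∈ S, ∀ j ∉ S, M i j ≠ 0 → i = w ∧ j = v) (hvw : M v w ≠ 0) (hxv : x v = 0) :
    x w = 0 := by
  classical
  set y := S.indicator x with hy
  have hMy : ∀ i ∈ S, (M *ᵥ y) i = 0 := fun i hi => by
    refine Eq.trans (Finset.sum_congr rfl fun j _ => ?_) (congrFun hx i)
    by_cases hj : j ∈ S
    · simp [hy, hj]
    · by_cases hij : M i j = 0
      · simp [hij]
      · simp [hy, (hcut i hi j hj hij).2, hxv]
  have hisotropic : y ⬝ᵥ M *ᵥ y = 0 := Finset.sum_eq_zero fun i _ => by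
    by_cases hi : i ∈ S
    · simp [hMy i hi]
    · simp [hy, hi]
  have hker : M *ᵥ y = 0 := (hM.dotProduct_mulVec_zero_iff y).1 (by simpa using hisotropic)
  have hsum : (M *ᵥ y) v = M v w * y w := by
    refine Finset.sum_eq_single w (fun j _ hj => ?_) (by simp)
    by_cases hjS : j ∈ S
    · have hvj : M j v = 0 := by
        by_contra h
        exact hj (hcut j hjS v hv h).1
      have hsymm : M v j = M j v := by simpa using hM.isHermitian.apply j v
      simp [hsymm, hvj]
    · simp [hy, hjS]
  rw [hker, hy, Set.indicator_of_mem hw] at hsum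
  exact (mul_eq_zero.1 hsum.symm).resolve_left hvw

lemma eq_zero_of_posSemidef_of_adj {G : SimpleGraph V} (hG : G.IsAcyclic) {M : Matrix V V ℝ}
    (hMG : inS G M) (hM : M.PosSemidef) {x : V → ℝ} (hx : M *ᵥ x = 0) {v w : V} (hvw : G.Adj v w)
    (hxv : x v = 0) : x w = 0 := by
  have hbridge := SimpleGraph.isAcyclic_iff_forall_adj_isBridge.1 hG hvw
  rw [SimpleGraph.isBridge_iff] at hbridge
  set H := G.deleteEdges {s(v, w)} with hH
  refine eq_zero_of_posSemidef_of_cut hM hx (S := {i | H.Reachable w i})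
    (SimpleGraph.Reachable.refl w) (fun h => hbridge h.symm) ?_ ((hMG.2 v w hvw.ne).2 hvw) hxv
  intro i hi j hj hij
  have hne : i ≠ j := by
    rintro rfl
    exact hj hi
  by_contra hcross
  refine hj (SimpleGraph.Reachable.trans hi (SimpleGraph.Adj.reachable ?_))
  rw [hH, SimpleGraph.deleteEdges_adj, Set.mem_singleton_iff, Sym2.eq_iff]
  refine ⟨(hMG.2 i j hne).1 hij, ?_⟩
  rintro (⟨rfl, -⟩ | h)
  · exact hbridge hi.symm
  · exact hcross h

lemma eq_zero_of_posSemidef_of_isTree {T : SimpleGraph V} (hT : T.IsTree) {M : Matrix V V ℝ}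
    (hMT : inS T M) (hM : M.PosSemidef) {x : V → ℝ} (hx : M *ᵥ x = 0) {v : V} (hxv : x v = 0) :
    x = 0 := by
  funext w
  obtain ⟨p⟩ := hT.1.preconnected v w
  induction p with
  | nil => exact hxv
  | cons h _ ih => exact ih (eq_zero_of_posSemidef_of_adj hT.2 hMT hM hx h hxv)

variable [DecidableEq V]

lemma posSemidef_one_sub {B : Matrix V V ℝ} (hB : B.IsSymm) {C : Matrix V W ℝ}
    (h : B * B + C * Cᵀ = 1) : (1 - B).PosSemidef := by
  have hdouble : (1 - B)ᴴ * (1 - B) + C * Cᴴ = (2 : ℝ) • (1 - B) := by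
    simp only [conjTranspose_eq_transpose_of_trivial, transpose_sub, transpose_one, hB.eq,
      eq_sub_of_add_eq' h, sub_mul, mul_sub, one_mul, mul_one]
    module
  have hhalf := ((posSemidef_conjTranspose_mul_self (1 - B)).add
    (posSemidef_self_mul_conjTranspose C)).smul (show (0 : ℝ) ≤ 2⁻¹ by norm_num)
  rwa [hdouble, smul_smul, inv_mul_cancel₀ two_ne_zero, one_smul] at hhalf

/- If `Cᵀ x = 0` then `(1 - B) (1 + B) x = 0`. As `1 - B` and `1 + B` are positive semidefinite
matrices of the tree, fixing one more coordinate of `(1 + B) x` and one of `x` forces `x = 0`. -/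
lemma card_le_card_add_two_of_isTree {T : SimpleGraph V} (hT : T.IsTree) {B : Matrix V V ℝ}
    (hB : inS T B) {C : Matrix V W ℝ} (h : B * B + C * Cᵀ = 1) :
    Fintype.card V ≤ Fintype.card W + 2 := by
  have hsub : (1 - B).PosSemidef := posSemidef_one_sub hB.1 h
  have hadd : (1 + B).PosSemidef := by
    simpa using posSemidef_one_sub (B := -B) hB.1.neg (by simpa using h)
  have hsubT : inS T (1 - B) := by
    simpa [sub_eq_neg_add] using inS_smul_add_smul_one hB (neg_ne_zero.2 one_ne_zero) 1
  have haddT : inS T (1 + B) := by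
    simpa [add_comm] using inS_smul_add_smul_one hB one_ne_zero 1
  obtain ⟨v⟩ := hT.1.nonempty
  let L : (V → ℝ) →ₗ[ℝ] (W → ℝ) × ℝ × ℝ :=
    Cᵀ.mulVecLin.prod ((LinearMap.proj v ∘ₗ (1 + B).mulVecLin).prod (LinearMap.proj v))
  have hL : Function.Injective L := by
    refine (injective_iff_map_eq_zero L).2 fun x hx => ?_
    obtain ⟨hCx, hBxv, hxv⟩ : Cᵀ *ᵥ x = 0 ∧ ((1 + B) *ᵥ x) v = 0 ∧ x v = 0 :=
      ⟨congrArg Prod.fst hx, congrArg (·.2.1) hx, congrArg (·.2.2) hx⟩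
    have hker : (1 - B) *ᵥ (1 + B) *ᵥ x = 0 := by
      have hprod : (1 - B) * (1 + B) = C * Cᵀ := by
        rw [eq_sub_of_add_eq' h]
        noncomm_ring
      rw [mulVec_mulVec, hprod, ← mulVec_mulVec, hCx, mulVec_zero]
    exact eq_zero_of_posSemidef_of_isTree hT haddT hadd
      (eq_zero_of_posSemidef_of_isTree hT hsubT hsub hker hBxv) hxv
  simpa using LinearMap.finrank_le_finrank_of_injective hL

lemma card_le_card_add_two_of_inS_graphJoin [DecidableEq W] {T : SimpleGraph V}
    {G : SimpleGraph W} (hT : T.IsTree) {A : Matrix (V ⊕ W) (V ⊕ W) ℝ} (hA : inS (graphJoin T G) A)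
    (hsq : A * A = 1) : Fintype.card V ≤ Fintype.card W + 2 := by
  have hblock : inS T A.toBlocks₁₁ :=
    graphJoin_comap_inl T G ▸ hA.submatrix Sum.inl_injective
  refine card_le_card_add_two_of_isTree hT hblock (C := A.toBlocks₁₂) ?_
  have hsymm : A.toBlocks₁₂ᵀ = A.toBlocks₂₁ := by
    ext i j
    exact hA.1.apply _ _
  rw [← fromBlocks_toBlocks A, fromBlocks_multiply, ← fromBlocks_one, fromBlocks_inj] at hsq
  rw [hsymm, hsq.1]

end Necessity

section StrongSpectralProperty

open scoped Topology

variable {V : Type*} [Fintype V]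

lemma trace_mul_lie_lie {X A : Matrix V V ℝ} (hX : X.IsSymm) (hA : A.IsSymm) :
    (X * ⁅⁅X, A⁆, A⁆).trace = (⁅X, A⁆ᵀ * ⁅X, A⁆).trace := by
  have hskew : ⁅X, A⁆ᵀ = A * X - X * A := by
    simp only [Ring.lie_def, transpose_sub, transpose_mul, hX.eq, hA.eq]
  rw [hskew, Ring.lie_def ⁅X, A⁆, mul_sub, sub_mul, trace_sub, trace_sub, ← mul_assoc, ← mul_assoc,
    trace_mul_comm _ A, ← mul_assoc]

lemma lie_eq_zero_of_trace_mul_lie_lie_eq_zero {X A : Matrix V V ℝ} (hX : X.IsSymm)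
    (hA : A.IsSymm) (h : (X * ⁅⁅X, A⁆, A⁆).trace = 0) : ⁅X, A⁆ = 0 := by
  rw [trace_mul_lie_lie hX hA, ← conjTranspose_eq_transpose_of_trivial] at h
  exact trace_conjTranspose_mul_self_eq_zero_iff.1 h

/-- The symmetric matrices supported on the pairs of distinct nonadjacent vertices of `G`. These
are the test matrices of the strong spectral property for `S(G)`. -/
def nonEdgeMatrices {V : Type*} (G : SimpleGraph V) : Submodule ℝ (Matrix V V ℝ) where
  carrier := {X | X.IsSymm ∧ ∀ i j, ¬ Gᶜ.Adj i j → X i j = 0}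
  add_mem' hX hY := ⟨hX.1.add hY.1, fun i j h => by simp [hX.2 i j h, hY.2 i j h]⟩
  zero_mem' := ⟨isSymm_zero, fun _ _ _ => rfl⟩
  smul_mem' c _ hX := ⟨hX.1.smul c, fun i j h => by simp [hX.2 i j h]⟩

/-- The strong spectral property of `A` relative to the pattern of `G`. For `A ∈ S(G)` this is
`HasSSP A`, but it is also meaningful, and stable under perturbation, when `A` has additional
zeros. -/
def HasSSPFor (G : SimpleGraph V) (A : Matrix V V ℝ) : Prop :=
  ∀ X ∈ nonEdgeMatrices G, ⁅X, A⁆ = 0 → X = 0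

lemma HasSSPFor.mono {G H : SimpleGraph V} (hGH : G ≤ H) {A : Matrix V V ℝ}
    (h : HasSSPFor G A) : HasSSPFor H A :=
  fun X hX => h X ⟨hX.1, fun i j hij => hX.2 i j fun hH => hij (compl_le_compl hGH hH)⟩

lemma HasSSPFor.submatrix_iso {W : Type*} [Fintype W] {G : SimpleGraph V} {H : SimpleGraph W}
    (e : G ≃g H) {A : Matrix W W ℝ} (hA : HasSSPFor H A) : HasSSPFor G (A.submatrix e e) := by
  intro X hX hcomm
  have hX' : X.submatrix e.symm e.symm ∈ nonEdgeMatrices H := by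
    refine ⟨hX.1.submatrix _, fun i j hij => hX.2 _ _ fun h => hij ⟨?_, ?_⟩⟩
    · rintro rfl
      exact h.1 rfl
    · exact fun hadj => h.2 (e.symm.map_adj_iff.2 hadj)
  have hlie : ⁅X.submatrix e.symm e.symm, A⁆ = ⁅X, A.submatrix e e⁆.submatrix e.symm e.symm := by
    have hA' : A = (A.submatrix e e).submatrix e.symm e.symm := by
      ext i j
      simp
    conv_lhs => rw [hA']
    rw [Ring.lie_def, Ring.lie_def, submatrix_sub, Pi.sub_apply, Pi.sub_apply]
    exact congrArg₂ _ (submatrix_mul_equiv _ _ _ e.symm.toEquiv _)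
      (submatrix_mul_equiv _ _ _ e.symm.toEquiv _)
  have hzero := hA _ hX' (by rw [hlie, hcomm, submatrix_zero, Pi.zero_apply, Pi.zero_apply])
  ext i j
  simpa using congrFun₂ hzero (e i) (e j)

variable [DecidableEq V]

open scoped Matrix.Norms.Operator

/-- The commutator map `X ↦ ⁅X, A⁆` on `nonEdgeMatrices G`. -/
noncomputable def commutatorMap (G : SimpleGraph V) (A : Matrix V V ℝ) :
    nonEdgeMatrices G →L[ℝ] Matrix V V ℝ :=
  ((ContinuousLinearMap.mul ℝ (Matrix V V ℝ)).flip A - ContinuousLinearMap.mul ℝ _ A).comp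
    (nonEdgeMatrices G).subtypeL

lemma commutatorMap_apply (G : SimpleGraph V) (A : Matrix V V ℝ) (X : nonEdgeMatrices G) :
    commutatorMap G A X = ⁅X.1, A⁆ :=
  rfl

lemma hasSSPFor_iff_injective {G : SimpleGraph V} {A : Matrix V V ℝ} :
    HasSSPFor G A ↔ Function.Injective (commutatorMap G A) := by
  simp [HasSSPFor, injective_iff_map_eq_zero, commutatorMap_apply]

omit [DecidableEq V] in
lemma isOpen_setOf_hasSSPFor (G : SimpleGraph V) : IsOpen {A | HasSSPFor G A} := by
  classical
  simp only [hasSSPFor_iff_injective]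
  refine ContinuousLinearMap.isOpen_injective.preimage (Continuous.clm_comp ?_ continuous_const)
  fun_prop

open Classical in
/-- The symmetrised restriction of a matrix to the pairs of distinct nonadjacent vertices: the
orthogonal projection onto `nonEdgeMatrices G` for the trace form. -/
noncomputable def nonEdgeProj (G : SimpleGraph V) : Matrix V V ℝ →ₗ[ℝ] nonEdgeMatrices G where
  toFun Z := ⟨(2⁻¹ : ℝ) • Gᶜ.adjMatrix ℝ ⊙ (Z + Zᵀ), by
    refine ⟨IsSymm.smul (.ext fun i j => ?_) _, fun i j h => by simp [h]⟩
    simp [SimpleGraph.adj_comm, add_comm]⟩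
  map_add' Y Z := Subtype.ext <| by
    simp only [transpose_add, hadamard_add, smul_add, Submodule.coe_add]
    abel
  map_smul' c Z := Subtype.ext <| by
    simp only [transpose_smul, hadamard_add, hadamard_smul, smul_add, smul_comm c,
      RingHom.id_apply, Submodule.coe_smul]

omit [Fintype V] in
lemma nonEdgeProj_apply_of_isSymm {G : SimpleGraph V} {Z : Matrix V V ℝ} (hZ : Z.IsSymm) {i j : V}
    (hij : Gᶜ.Adj i j) : (nonEdgeProj G Z).1 i j = Z i j := by
  have hadj := (SimpleGraph.compl_adj _ _ _).1 hij
  simp [nonEdgeProj, hadj, hZ.apply i j, ← two_mul]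

lemma trace_mul_nonEdgeProj {G : SimpleGraph V} {X : Matrix V V ℝ} (hX : X ∈ nonEdgeMatrices G)
    (Z : Matrix V V ℝ) : (X * (nonEdgeProj G Z).1).trace = (X * Z).trace := by
  have hmask : (X * (nonEdgeProj G Z).1).trace = (X * ((2⁻¹ : ℝ) • (Z + Zᵀ))).trace := by
    simp only [trace, diag, mul_apply]
    refine Finset.sum_congr rfl fun i _ => Finset.sum_congr rfl fun j _ => ?_
    by_cases hij : Gᶜ.Adj i j
    · simp [nonEdgeProj, hij.symm]
    · simp [hX.2 i j hij]
  have htranspose : (X * Zᵀ).trace = (X * Z).trace := by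
    rw [← trace_transpose, transpose_mul, transpose_transpose, hX.1.eq, trace_mul_comm]
  rw [hmask, mul_smul_comm, mul_add, trace_smul, trace_add, htranspose, smul_eq_mul]
  ring

lemma hasStrictFDerivAt_exp_conj {E : Type*} [NormedAddCommGroup E] [NormedSpace ℝ E]
    (K : E →L[ℝ] Matrix V V ℝ) (A : Matrix V V ℝ) :
    HasStrictFDerivAt (fun X => NormedSpace.exp (K X) * A * NormedSpace.exp (-K X))
      (((ContinuousLinearMap.mul ℝ (Matrix V V ℝ)).flip A - ContinuousLinearMap.mul ℝ _ A).comp K)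
      0 := by
  have hexp : ∀ L : E →L[ℝ] Matrix V V ℝ,
      HasStrictFDerivAt (fun X => NormedSpace.exp (L X)) L 0 := fun L => by
    have h0 : HasStrictFDerivAt (NormedSpace.exp : Matrix V V ℝ → Matrix V V ℝ)
        (1 : Matrix V V ℝ →L[ℝ] Matrix V V ℝ) (L 0) := by
      rw [map_zero]
      exact hasStrictFDerivAt_exp_zero
    exact h0.comp (0 : E) L.hasStrictFDerivAt
  refine (((hexp K).mul_const' A).mul' (hexp (-K))).congr_fderiv
    (ContinuousLinearMap.ext fun X => ?_)
  change NormedSpace.exp (K 0) * A * -K X + K X * A * NormedSpace.exp ((-K) 0) =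
    K X * A - A * K X
  simp [sub_eq_add_neg, add_comm]

lemma surjective_nonEdgeProj_lie_commutatorMap {G : SimpleGraph V} {A : Matrix V V ℝ}
    (hA : A.IsSymm) (h : HasSSPFor G A) :
    Function.Surjective fun X => nonEdgeProj G ⁅commutatorMap G A X, A⁆ := by
  let D : nonEdgeMatrices G →ₗ[ℝ] nonEdgeMatrices G :=
    nonEdgeProj G ∘ₗ (LinearMap.mulRight ℝ A - LinearMap.mulLeft ℝ A) ∘ₗ commutatorMap G A
  have hD : Function.Injective D := by
    refine (injective_iff_map_eq_zero D).2 fun X hX => Subtype.ext (h X X.2 ?_)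
    refine lie_eq_zero_of_trace_mul_lie_lie_eq_zero X.2.1 hA ?_
    have hX' : nonEdgeProj G ⁅⁅X.1, A⁆, A⁆ = 0 := hX
    rw [← trace_mul_nonEdgeProj X.2, hX']
    simp
  exact LinearMap.injective_iff_surjective.1 hD

/- The derivative at `0` of the projection of `exp ⁅X, A⁆ * A * exp (-⁅X, A⁆)` is the surjection of
the previous lemma, so these projections cover a neighbourhood of that of `A`. -/
lemma HasSSPFor.eventually_exists_orthogonal_conj {G : SimpleGraph V} {A : Matrix V V ℝ}
    (hA : A.IsSymm) (h : HasSSPFor G A) {U : Set (Matrix V V ℝ)} (hU : U ∈ 𝓝 A) :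
    ∀ᶠ Y in 𝓝 (0 : nonEdgeMatrices G), ∃ Q ∈ orthogonalGroup V ℝ, Q * A * Qᵀ ∈ U ∧
      ∀ i j, Gᶜ.Adj i j → (Q * A * Qᵀ) i j = A i j + Y.1 i j := by
  let K := commutatorMap G A
  let P := (nonEdgeProj G).toContinuousLinearMap
  let F : nonEdgeMatrices G → Matrix V V ℝ :=
    fun X => NormedSpace.exp (K X) * A * NormedSpace.exp (-K X)
  have hF0 : F 0 = A := by simp [F]
  have hF := hasStrictFDerivAt_exp_conj K A
  have hmap : Filter.map (fun X => P (F X)) (𝓝 0) = 𝓝 (P A) := by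
    have hcover := (P.hasStrictFDerivAt.comp 0 hF).map_nhds_eq_of_surj
      (LinearMap.range_eq_top.2 (by exact surjective_nonEdgeProj_lie_commutatorMap hA h))
    exact hcover.trans (congrArg (fun Z => 𝓝 (P Z)) hF0)
  have hcover : ∀ᶠ Z in 𝓝 (P A), ∃ X, F X ∈ U ∧ P (F X) = Z := by
    rw [← hmap, eventually_map]
    filter_upwards [hF.continuousAt.preimage_mem_nhds (hF0.symm ▸ hU)] with X hX
    exact ⟨X, hX, rfl⟩
  have hshift : Tendsto (fun Y => P A + Y) (𝓝 0) (𝓝 (P A)) :=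
    (continuous_const.add continuous_id).tendsto' 0 _ (add_zero _)
  filter_upwards [hshift.eventually hcover] with Y ⟨X, hXU, hXY⟩
  have hskew : (K X)ᵀ = -K X := by
    simp only [K, commutatorMap_apply, Ring.lie_def, transpose_sub, transpose_mul, X.2.1.eq, hA.eq,
      neg_sub]
  have hexp : (NormedSpace.exp (K X))ᵀ = NormedSpace.exp (-K X) := by
    rw [← Matrix.exp_transpose, hskew]
  refine ⟨NormedSpace.exp (K X), ?_, hexp ▸ hXU, fun i j hij => ?_⟩
  · rw [mem_orthogonalGroup_iff, hexp,
      ← Matrix.exp_add_of_commute _ _ ((Commute.refl (K X)).neg_right), add_neg_cancel,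
      NormedSpace.exp_zero]
  · have hsymm : (F X).IsSymm := by
      simp only [F, ← hexp, IsSymm, transpose_mul, transpose_transpose, hA.eq, mul_assoc]
    have hentry := congrFun₂ (congrArg Subtype.val hXY) i j
    rw [hexp, ← nonEdgeProj_apply_of_isSymm hA hij]
    exact (nonEdgeProj_apply_of_isSymm hsymm hij).symm.trans hentry

end StrongSpectralProperty

section Involution

variable {V W : Type*} [Fintype V] [DecidableEq V] [Fintype W] [DecidableEq W]

/-- `S(G)` contains a symmetric involution, that is, a symmetric orthogonal matrix, with the strong
spectral property. For `G ≠ ⊥` this is a robust form of `q(G) = 2`. -/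
def HasSSPInvolution (G : SimpleGraph V) : Prop :=
  ∃ A, inS G A ∧ A * A = 1 ∧ HasSSPFor G A

lemma HasSSPInvolution.qGraph_eq_two {G : SimpleGraph V} (hG : G ≠ ⊥) (h : HasSSPInvolution G) :
    qGraph G = 2 :=
  let ⟨A, hA, hsq, _⟩ := h
  (qGraph_eq_two_iff hG).2 ⟨A, hA, hsq⟩

lemma HasSSPInvolution.of_iso {G : SimpleGraph V} {H : SimpleGraph W} (e : G ≃g H)
    (h : HasSSPInvolution H) : HasSSPInvolution G := by
  obtain ⟨A, hA, hsq, hssp⟩ := h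
  exact ⟨A.submatrix e e, hA.submatrix_iso e, submatrix_mul_self_eq_one e.toEquiv hsq,
    hssp.submatrix_iso e⟩

lemma hasSSPInvolution_top [Nonempty V] : HasSSPInvolution (⊤ : SimpleGraph V) := by
  have hcard : (Fintype.card V : ℝ) ≠ 0 := by simp
  refine ⟨1 - (2 / Fintype.card V : ℝ) • vecMulVec 1 1, ⟨?_, fun i j hij => ?_⟩, ?_,
    fun X hX _ => ?_⟩
  · ext i j
    simp [one_apply, eq_comm]
  · simp [hij]
  · have hones : (vecMulVec 1 1 : Matrix V V ℝ) * vecMulVec 1 1 =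
        (Fintype.card V : ℝ) • (vecMulVec 1 1 : Matrix V V ℝ) := by
      rw [vecMulVec_mul_vecMulVec, one_dotProduct_one]
      ext i j
      simp [vecMulVec_apply]
    simp only [sub_mul, mul_sub, one_mul, mul_one, smul_mul_assoc, mul_smul_comm, hones]
    match_scalars <;> field_simp
    ring
  · ext i j
    exact hX.2 i j (by simp)

open scoped Topology in
lemma exists_involution_mem_of_hasSSPFor {G : SimpleGraph V} {A : Matrix V V ℝ} (hA : A.IsSymm)
    (hsq : A * A = 1) (hssp : HasSSPFor G A) {U : Set (Matrix V V ℝ)} (hU : U ∈ 𝓝 A)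
    {Y : Matrix V V ℝ} (hY : Y ∈ nonEdgeMatrices G) :
    ∃ t ≠ 0, ∃ M ∈ U, M.IsSymm ∧ M * M = 1 ∧ ∀ i j, Gᶜ.Adj i j → M i j = A i j + t * Y i j := by
  have hlim : Tendsto (fun t : ℝ => t • (⟨Y, hY⟩ : nonEdgeMatrices G)) (𝓝[≠] 0) (𝓝 0) :=
    ((continuous_id.smul continuous_const).tendsto' 0 0 (zero_smul ℝ _)).mono_left
      nhdsWithin_le_nhds
  obtain ⟨t, ⟨Q, hQ, hQU, hQY⟩, ht⟩ := ((hlim.eventually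
    (hssp.eventually_exists_orthogonal_conj hA hU)).and self_mem_nhdsWithin).exists
  refine ⟨t, ht, _, hQU, ?_, ?_, hQY⟩
  · simp only [IsSymm, transpose_mul, transpose_transpose, hA.eq, mul_assoc]
  · calc Q * A * Qᵀ * (Q * A * Qᵀ) = Q * (A * (Qᵀ * Q) * A) * Qᵀ := by simp only [mul_assoc]
      _ = 1 := by
        rw [(mem_orthogonalGroup_iff' V ℝ).1 hQ, mul_one, hsq, mul_one,
          (mem_orthogonalGroup_iff V ℝ).1 hQ]

end Involution

section GenericParameters

open scoped Topology

variable {V : Type*} [Fintype V] [DecidableEq V]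

lemma eventually_cofinite_eval_ne_zero {p : Polynomial ℝ} (hp : p ≠ 0) :
    ∀ᶠ x in cofinite, p.eval x ≠ 0 := by
  simpa [eventually_cofinite, Polynomial.IsRoot] using Polynomial.finite_setOfPred_isRoot hp

lemma eventually_cofinite_det_smul_one_sub_ne_zero (M : Matrix V V ℝ) :
    ∀ᶠ μ : ℝ in cofinite, (μ • 1 - M).det ≠ 0 := by
  simpa [eval_charpoly, smul_one_eq_diagonal] using
    eventually_cofinite_eval_ne_zero M.charpoly_monic.ne_zero

lemma eval_adjugate_charmatrix_mulVec (M : Matrix V V ℝ) (c : V → ℝ) (i : V) (μ : ℝ) :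
    ((M.charmatrix.adjugate *ᵥ fun j => .C (c j)) i).eval μ =
      ((μ • 1 - M).adjugate *ᵥ c) i := by
  have hmap : M.charmatrix.map (Polynomial.evalRingHom μ) = μ • 1 - M := by
    ext j k
    simp [charmatrix_apply, diagonal_apply, one_apply, apply_ite]
  have hadj := RingHom.map_adjugate (Polynomial.evalRingHom μ) M.charmatrix
  simp only [RingHom.mapMatrix_apply, hmap] at hadj
  simp [← hadj, mulVec, dotProduct, Polynomial.eval_finsetSum]

lemma eventually_cofinite_adjugate_mulVec_ne_zero (M : Matrix V V ℝ) {c : V → ℝ} {i : V}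
    (hc : c i ≠ 0) : ∀ᶠ μ : ℝ in cofinite, ((μ • 1 - M).adjugate *ᵥ c) i ≠ 0 := by
  simp only [← eval_adjugate_charmatrix_mulVec]
  refine eventually_cofinite_eval_ne_zero fun h0 => ?_
  have hcont : Continuous fun ε : ℝ => ((1 - ε • M).adjugate *ᵥ c) i :=
    (continuous_apply i).comp (Continuous.matrix_mulVec
      (Continuous.matrix_adjugate (by fun_prop)) continuous_const)
  have hnear : ∀ᶠ ε : ℝ in 𝓝[≠] 0, ((1 - ε • M).adjugate *ᵥ c) i ≠ 0 :=
    (hcont.continuousAt.eventually_ne (by simpa using hc)).filter_mono nhdsWithin_le_nhds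
  obtain ⟨ε, hε, hε0⟩ := (hnear.and self_mem_nhdsWithin).exists
  refine hε ?_
  have hscale : 1 - ε • M = ε • (ε⁻¹ • 1 - M) := by
    rw [smul_sub, smul_smul, mul_inv_cancel₀ hε0, one_smul]
  rw [hscale, adjugate_smul, smul_mulVec, Pi.smul_apply, ← eval_adjugate_charmatrix_mulVec, h0,
    Polynomial.eval_zero, smul_zero]

lemma eventually_cofinite_add_mul_ne_zero {a b : ℝ} (h : a ≠ 0 ∨ b ≠ 0) :
    ∀ᶠ τ : ℝ in cofinite, a + b * τ ≠ 0 := by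
  have hp : (.C a + .C b * .X : Polynomial ℝ) ≠ 0 := fun h0 => by
    have ha : a = 0 := by simpa using congrArg (Polynomial.eval 0) h0
    have hb : b = 0 := by simpa [ha] using congrArg (Polynomial.eval 1) h0
    exact h.elim (· ha) (· hb)
  simpa using eventually_cofinite_eval_ne_zero hp

end GenericParameters

section DirectSum

variable {V W V' W' : Type*} [Fintype V] [Fintype W]

lemma hasSSPFor_fromBlocks {G : SimpleGraph (V ⊕ W)} {A : Matrix V V ℝ} {R : Matrix W W ℝ}
    (hA : HasSSPFor (G.comap Sum.inl) A) (hR : HasSSPFor (G.comap Sum.inr) R)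
    (hAR : ∀ L : Matrix V W ℝ, (∀ v w, G.Adj (.inl v) (.inr w) → L v w = 0) →
      L * R = A * L → L = 0) :
    HasSSPFor G (fromBlocks A 0 0 R) := by
  rintro X ⟨hX, hsupp⟩ hcomm
  have hblocks := (fromBlocks_toBlocks X).symm
  have hsymm := hX
  rw [hblocks, isSymm_fromBlocks_iff] at hsymm
  rw [Ring.lie_def, sub_eq_zero, hblocks, fromBlocks_multiply, fromBlocks_multiply,
    fromBlocks_inj] at hcomm
  simp only [Matrix.mul_zero, Matrix.zero_mul, add_zero, zero_add] at hcomm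
  have h₁₁ : X.toBlocks₁₁ = 0 := by
    refine hA _ ⟨hsymm.1, fun i j hij => hsupp _ _ fun h => hij ?_⟩ (sub_eq_zero.2 hcomm.1)
    exact ⟨fun hne => h.1 (congrArg _ hne), h.2⟩
  have h₂₂ : X.toBlocks₂₂ = 0 := by
    refine hR _ ⟨hsymm.2.2.2, fun i j hij => hsupp _ _ fun h => hij ?_⟩
      (sub_eq_zero.2 hcomm.2.2.2)
    exact ⟨fun hne => h.1 (congrArg _ hne), h.2⟩
  have h₁₂ : X.toBlocks₁₂ = 0 := hAR _ (fun v w hvw => hsupp _ _ fun h => h.2 hvw) hcomm.2.1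
  rw [hblocks, ← hsymm.2.1, h₁₁, h₁₂, h₂₂, transpose_zero, fromBlocks_zero]

end DirectSum

section LeafExtension

variable {V W : Type*}

/-- The direct sum of `A` and the reflection `!![μ, s; s, -μ]`, with one new index placed next to
each of the two index types of `A`. -/
def leafExtension (A : Matrix (V ⊕ W) (V ⊕ W) ℝ) (μ s : ℝ) :
    Matrix ((V ⊕ Unit) ⊕ (W ⊕ Unit)) ((V ⊕ Unit) ⊕ (W ⊕ Unit)) ℝ :=
  (fromBlocks A 0 0 (fromBlocks (μ • 1) (s • 1) (s • 1) (-μ • 1))).submatrix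
    (Equiv.sumSumSumComm V Unit W Unit) (Equiv.sumSumSumComm V Unit W Unit)

lemma leafExtension_swap (A : Matrix (V ⊕ W) (V ⊕ W) ℝ) (μ s : ℝ) :
    (leafExtension A μ s).submatrix Sum.swap Sum.swap =
      leafExtension (A.submatrix Sum.swap Sum.swap) (-μ) s := by
  ext ((v | -) | (w | -)) ((v' | -) | (w' | -)) <;> simp [leafExtension]

lemma isSymm_leafExtension {A : Matrix (V ⊕ W) (V ⊕ W) ℝ} (hA : A.IsSymm) (μ s : ℝ) :
    (leafExtension A μ s).IsSymm := by
  refine IsSymm.submatrix (hA.fromBlocks transpose_zero (IsSymm.fromBlocks ?_ ?_ ?_)) _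
  all_goals simp [IsSymm]

lemma leafExtension_eq_zero {G : SimpleGraph V} {H : SimpleGraph W}
    {A : Matrix (V ⊕ W) (V ⊕ W) ℝ} (hA : inS (graphJoin G H) A) (μ s : ℝ)
    {x y : (V ⊕ Unit) ⊕ (W ⊕ Unit)}
    (hxy : (graphJoin (G ⊕g (⊥ : SimpleGraph Unit)) (H ⊕g (⊥ : SimpleGraph Unit)))ᶜ.Adj x y) :
    leafExtension A μ s x y = 0 := by
  have hzero : ∀ i j, i ≠ j → ¬ (graphJoin G H).Adj i j → A i j = 0 :=
    fun i j hij h => not_not.1 (mt (hA.2 i j hij).1 h)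
  rw [SimpleGraph.compl_adj] at hxy
  rcases x with (v | _) | (w | _) <;> rcases y with (v' | _) | (w' | _) <;>
    first
    | rfl
    | (simp at hxy; done)
    | exact hzero _ _ (by simpa using hxy.1) (by simpa using hxy.2)

variable [Fintype V] [DecidableEq V] [Fintype W] [DecidableEq W]

lemma leafExtension_mul_self {A : Matrix (V ⊕ W) (V ⊕ W) ℝ} (hA : A * A = 1) {μ s : ℝ}
    (hμs : μ * μ + s * s = 1) : leafExtension A μ s * leafExtension A μ s = 1 := by
  rw [leafExtension, submatrix_mul_equiv, fromBlocks_multiply, fromBlocks_multiply, hA]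
  simp [mul_comm s, smul_smul, ← add_smul, hμs, add_comm (s * s)]

omit [Fintype W] [DecidableEq W] in
lemma eq_zero_of_smul_eq_mul {B : Matrix V V ℝ} {μ : ℝ} (hμ : (μ • 1 - B).det ≠ 0)
    {P : Matrix V W ℝ} (hP : μ • P = B * P) : P = 0 := by
  have hzero : (μ • 1 - B) * P = 0 := by
    rw [Matrix.sub_mul, smul_mul, Matrix.one_mul, hP, sub_self]
  rw [← nonsing_inv_mul_cancel_left _ P (isUnit_iff_ne_zero.2 hμ), hzero, Matrix.mul_zero]

lemma hasSSPFor_leafExtension {G : SimpleGraph V} {H : SimpleGraph W}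
    {A : Matrix (V ⊕ W) (V ⊕ W) ℝ} (hA : HasSSPFor (graphJoin G H) A) {μ : ℝ} (s : ℝ)
    (hμ : (μ • 1 - A.toBlocks₁₁).det ≠ 0) (hμ' : (-μ • 1 - A.toBlocks₂₂).det ≠ 0) :
    HasSSPFor (graphJoin (G ⊕g (⊥ : SimpleGraph Unit)) (H ⊕g (⊥ : SimpleGraph Unit)))
      (leafExtension A μ s) := by
  let e := Equiv.sumSumSumComm V Unit W Unit
  let Γ := graphJoin (G ⊕g (⊥ : SimpleGraph Unit)) (H ⊕g (⊥ : SimpleGraph Unit))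
  have hblocks : HasSSPFor (Γ.comap e.symm)
      (fromBlocks A 0 0 (fromBlocks (μ • 1) (s • 1) (s • 1) (-μ • 1))) := by
    refine hasSSPFor_fromBlocks ?_ (fun X hX _ => ?_) fun L hL hcomm => ?_
    · have hcomap : (Γ.comap e.symm).comap Sum.inl = graphJoin G H := by
        ext (v | w) (v' | w') <;> simp [Γ, e]
      rwa [hcomap]
    · ext (i | i) (j | j) <;> refine hX.2 _ _ ?_ <;> simp [Γ, e]
    · have h₁₂ : L.toBlocks₁₂ = 0 := by
        ext v i
        exact hL _ _ (by simp [Γ, e])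
      have h₂₁ : L.toBlocks₂₁ = 0 := by
        ext w i
        exact hL _ _ (by simp [Γ, e])
      rw [← fromBlocks_toBlocks L, ← fromBlocks_toBlocks A, h₁₂, h₂₁, fromBlocks_multiply,
        fromBlocks_multiply, fromBlocks_inj] at hcomm
      simp only [Matrix.mul_zero, add_zero, zero_add, smul_zero, Matrix.mul_smul,
        Matrix.mul_one] at hcomm
      rw [← fromBlocks_toBlocks L, h₁₂, h₂₁, eq_zero_of_smul_eq_mul hμ hcomm.1,
        eq_zero_of_smul_eq_mul hμ' hcomm.2.2.2, fromBlocks_zero]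
  exact hblocks.submatrix_iso (SimpleGraph.Iso.comap e.symm Γ).symm

end LeafExtension

section CrossTest

variable {V W : Type*} [Fintype V] [DecidableEq V] [Fintype W]

/-- The vector which, by Cramer's rule, is a nonzero multiple of the entries of the symmetric
involution `M` between `V` and the leaf next to `W`, when `u` and `v` are proportional to the
entries of `M` between each side and its own leaf. -/
noncomputable def crossTest (u : V → ℝ) (v : W → ℝ)
    (M : Matrix ((V ⊕ Unit) ⊕ (W ⊕ Unit)) ((V ⊕ Unit) ⊕ (W ⊕ Unit)) ℝ) : V → ℝ :=
  (-M (.inr (.inr ())) (.inr (.inr ())) • 1 - M.toBlocks₁₁.toBlocks₁₁).adjugate *ᵥ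
    (M (.inl (.inr ())) (.inr (.inr ())) • u + M.toBlocks₁₂.toBlocks₁₁ *ᵥ v)

lemma continuous_crossTest (u : V → ℝ) (v : W → ℝ) : Continuous (crossTest u v) := by
  have hentry : ∀ x y, Continuous fun M : Matrix ((V ⊕ Unit) ⊕ (W ⊕ Unit))
      ((V ⊕ Unit) ⊕ (W ⊕ Unit)) ℝ => M x y := fun x y => continuous_id.matrix_elem x y
  refine Continuous.matrix_mulVec (Continuous.matrix_adjugate ?_) ?_
  · exact ((hentry _ _).neg.smul continuous_const).sub (continuous_matrix fun _ _ => hentry _ _)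
  · exact ((hentry _ _).smul continuous_const).add
      (Continuous.matrix_mulVec (continuous_matrix fun _ _ => hentry _ _) continuous_const)

lemma crossTest_leafExtension (u : V → ℝ) (v : W → ℝ) (A : Matrix (V ⊕ W) (V ⊕ W) ℝ) (μ s : ℝ) :
    crossTest u v (leafExtension A μ s) =
      (μ • 1 - A.toBlocks₁₁).adjugate *ᵥ (s • u + A.toBlocks₁₂ *ᵥ v) := by
  have h₁₁ : (leafExtension A μ s).toBlocks₁₁.toBlocks₁₁ = A.toBlocks₁₁ := rfl
  have h₁₂ : (leafExtension A μ s).toBlocks₁₂.toBlocks₁₁ = A.toBlocks₁₂ := rfl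
  rw [crossTest, h₁₁, h₁₂]
  simp [leafExtension]

lemma ne_zero_of_crossTest_ne_zero [DecidableEq W] {u : V → ℝ} {v : W → ℝ}
    {M : Matrix ((V ⊕ Unit) ⊕ (W ⊕ Unit)) ((V ⊕ Unit) ⊕ (W ⊕ Unit)) ℝ} (hM : M * M = 1) {t : ℝ}
    (ht : t ≠ 0) (hu : ∀ i, M (.inl (.inl i)) (.inl (.inr ())) = t * u i)
    (hv : ∀ j, M (.inr (.inl j)) (.inr (.inr ())) = t * v j) {i : V} (hi : crossTest u v M i ≠ 0) :
    M (.inl (.inl i)) (.inr (.inr ())) ≠ 0 := by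
  let p : V → ℝ := fun i => M (.inl (.inl i)) (.inr (.inr ()))
  set B := -M (.inr (.inr ())) (.inr (.inr ())) • 1 - M.toBlocks₁₁.toBlocks₁₁ with hB
  set r := M (.inl (.inr ())) (.inr (.inr ())) • u + M.toBlocks₁₂.toBlocks₁₁ *ᵥ v with hr
  have hBp : B *ᵥ p = t • r := by
    ext i
    have hentry : (M.toBlocks₁₁.toBlocks₁₁ *ᵥ p) i + t * u i * M (.inl (.inr ())) (.inr (.inr ())) +
        (t * (M.toBlocks₁₂.toBlocks₁₁ *ᵥ v) i + p i * M (.inr (.inr ())) (.inr (.inr ()))) = 0 := by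
      have hsum := congrFun₂ hM (.inl (.inl i)) (.inr (.inr ()))
      simpa [mul_apply, hu, hv, mulVec, dotProduct, Finset.mul_sum, mul_left_comm, p,
        toBlocks₁₁, toBlocks₁₂] using hsum
    simp only [hB, hr, sub_mulVec, smul_mulVec, one_mulVec, Pi.sub_apply, Pi.smul_apply,
      Pi.add_apply, smul_eq_mul]
    linarith
  have hcramer : B.det • p = t • B.adjugate *ᵥ r := by
    rw [← mulVec_smul, ← hBp, mulVec_mulVec, adjugate_mul, smul_mulVec, one_mulVec]
  intro (hpi : p i = 0)
  have hzero := congrFun hcramer i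
  rw [Pi.smul_apply, Pi.smul_apply, hpi, smul_zero] at hzero
  exact smul_ne_zero ht hi hzero.symm

end CrossTest

section Pendant

open scoped Topology

variable {V W : Type*}

/-- The graph `G` with a new vertex `Sum.inr ()` joined to `w` only. -/
def pendant (G : SimpleGraph V) (w : V) : SimpleGraph (V ⊕ Unit) :=
  (G ⊕g (⊥ : SimpleGraph Unit)) ⊔ SimpleGraph.edge (.inl w) (.inr ())

section Adj

variable (G : SimpleGraph V) (w : V)

@[simp]
lemma pendant_adj_inl_inl {v v' : V} : (pendant G w).Adj (.inl v) (.inl v') ↔ G.Adj v v' := by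
  simp [pendant, SimpleGraph.edge_adj]

@[simp]
lemma pendant_adj_inl_inr {v : V} {i : Unit} : (pendant G w).Adj (.inl v) (.inr i) ↔ v = w := by
  simp [pendant, SimpleGraph.edge_adj]

@[simp]
lemma pendant_adj_inr_inl {v : V} {i : Unit} : (pendant G w).Adj (.inr i) (.inl v) ↔ v = w := by
  simp [pendant, SimpleGraph.edge_adj]

end Adj

lemma inS_of_adj_of_compl_adj {G : SimpleGraph V} {M : Matrix V V ℝ} (hM : M.IsSymm)
    (hadj : ∀ i j, G.Adj i j → M i j ≠ 0) (hcompl : ∀ i j, Gᶜ.Adj i j → M i j = 0) : inS G M :=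
  ⟨hM, fun i j hij => ⟨fun h => by_contra fun hG => h (hcompl i j ⟨hij, hG⟩), hadj i j⟩⟩

lemma inS_pendant {G : SimpleGraph V} {w : V} {M : Matrix (V ⊕ Unit) (V ⊕ Unit) ℝ} (hM : M.IsSymm)
    (hG : inS G M.toBlocks₁₁) (hw : ∀ v, M (.inl v) (.inr ()) ≠ 0 ↔ v = w) :
    inS (pendant G w) M := by
  refine ⟨hM, ?_⟩
  rintro (v | ⟨⟩) (v' | ⟨⟩) hne
  · exact (hG.2 v v' (by simpa using hne)).trans (pendant_adj_inl_inl G w).symm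
  · exact (hw v).trans (pendant_adj_inl_inr G w).symm
  · rw [hM.apply, hw v', pendant_adj_inr_inl]
  · exact absurd rfl hne

lemma inS_graphJoin {G : SimpleGraph V} {H : SimpleGraph W} {M : Matrix (V ⊕ W) (V ⊕ W) ℝ}
    (hM : M.IsSymm) (hG : inS G M.toBlocks₁₁) (hH : inS H M.toBlocks₂₂)
    (hGH : ∀ v w, M (.inl v) (.inr w) ≠ 0) : inS (graphJoin G H) M := by
  refine ⟨hM, ?_⟩
  rintro (v | w) (v' | w') hne
  · exact (hG.2 v v' (by simpa using hne)).trans (graphJoin_adj_inl_inl G H).symm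
  · simpa using hGH v w'
  · simpa [hM.apply (.inl v')] using hGH v' w
  · exact (hH.2 w w' (by simpa using hne)).trans (graphJoin_adj_inr_inr G H).symm

variable [Fintype V] [DecidableEq V] [Fintype W] [DecidableEq W]

/-- The direction in which `leafExtension` is perturbed: it attaches each of the two leaves to its
own side with weights `u` and `v`. -/
def leafDirection (u : V → ℝ) (v : W → ℝ) :
    Matrix ((V ⊕ Unit) ⊕ (W ⊕ Unit)) ((V ⊕ Unit) ⊕ (W ⊕ Unit)) ℝ :=
  fromBlocks (fromBlocks 0 (replicateCol Unit u) (replicateRow Unit u) 0) 0 0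
    (fromBlocks 0 (replicateCol Unit v) (replicateRow Unit v) 0)

omit [Fintype V] [DecidableEq V] [Fintype W] [DecidableEq W] in
lemma leafDirection_mem_nonEdgeMatrices (G : SimpleGraph V) (H : SimpleGraph W) (u : V → ℝ)
    (v : W → ℝ) : leafDirection u v ∈
      nonEdgeMatrices (graphJoin (G ⊕g (⊥ : SimpleGraph Unit)) (H ⊕g (⊥ : SimpleGraph Unit))) := by
  refine ⟨?_, ?_⟩
  · ext ((_ | _) | (_ | _)) ((_ | _) | (_ | _)) <;> rfl
  · rintro ((_ | _) | (_ | _)) ((_ | _) | (_ | _)) h <;> first | rfl | exact absurd (by simp) h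

omit [DecidableEq W] in
lemma eventually_cofinite_crossTest_smul_right_ne_zero {A : Matrix (V ⊕ W) (V ⊕ W) ℝ} {μ : ℝ}
    {v : W → ℝ} (h : ∀ i, ((μ • 1 - A.toBlocks₁₁).adjugate *ᵥ (A.toBlocks₁₂ *ᵥ v)) i ≠ 0)
    (u : V → ℝ) (s : ℝ) :
    ∀ᶠ τ : ℝ in cofinite, ∀ i, crossTest u (τ • v) (leafExtension A μ s) i ≠ 0 :=
  eventually_all.2 fun i => by
    simpa [crossTest_leafExtension, mulVec_add, mulVec_smul, mul_comm] using
      eventually_cofinite_add_mul_ne_zero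
        (a := s * ((μ • 1 - A.toBlocks₁₁).adjugate *ᵥ u) i) (.inr (h i))

omit [DecidableEq W] in
lemma eventually_cofinite_crossTest_smul_left_ne_zero {A : Matrix (V ⊕ W) (V ⊕ W) ℝ} {μ : ℝ}
    {v : W → ℝ} (h : ∀ i, ((μ • 1 - A.toBlocks₁₁).adjugate *ᵥ (A.toBlocks₁₂ *ᵥ v)) i ≠ 0)
    (u : V → ℝ) (s : ℝ) :
    ∀ᶠ τ : ℝ in cofinite, ∀ i, crossTest (τ • u) v (leafExtension A μ s) i ≠ 0 :=
  eventually_all.2 fun i => by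
    simpa [crossTest_leafExtension, mulVec_add, mulVec_smul, mul_left_comm, mul_comm, add_comm]
      using eventually_cofinite_add_mul_ne_zero
        (b := s * ((μ • 1 - A.toBlocks₁₁).adjugate *ᵥ u) i) (.inl (h i))

lemma exists_crossTest_leafExtension_ne_zero {A : Matrix (V ⊕ W) (V ⊕ W) ℝ} {u : V → ℝ} {v : W → ℝ}
    (hv : ∀ i, (A.toBlocks₁₂ *ᵥ v) i ≠ 0) (hu : ∀ j, (A.toBlocks₂₁ *ᵥ u) j ≠ 0) :
    ∃ μ s τ : ℝ, μ * μ + s * s = 1 ∧ s ≠ 0 ∧ τ ≠ 0 ∧ (μ • 1 - A.toBlocks₁₁).det ≠ 0 ∧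
      (-μ • 1 - A.toBlocks₂₂).det ≠ 0 ∧
      (∀ i, crossTest u (τ • v) (leafExtension A μ s) i ≠ 0) ∧
      ∀ j, crossTest (τ • v) u ((leafExtension A μ s).submatrix Sum.swap Sum.swap) j ≠ 0 := by
  have hneg : Tendsto (fun μ : ℝ => -μ) cofinite cofinite := neg_injective.tendsto_cofinite
  have hgeneric := (eventually_cofinite_det_smul_one_sub_ne_zero A.toBlocks₁₁).and <|
    (hneg.eventually (eventually_cofinite_det_smul_one_sub_ne_zero A.toBlocks₂₂)).and <|
    (eventually_all.2 fun i =>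
      eventually_cofinite_adjugate_mulVec_ne_zero A.toBlocks₁₁ (hv i)).and <|
    hneg.eventually (eventually_all.2 fun j =>
      eventually_cofinite_adjugate_mulVec_ne_zero A.toBlocks₂₂ (hu j))
  have hsmall : ∀ᶠ μ : ℝ in 𝓝[≠] 0, 0 < 1 - μ * μ :=
    (ContinuousAt.eventually_lt (by fun_prop) (by fun_prop) (by simp)).filter_mono
      nhdsWithin_le_nhds
  obtain ⟨μ, ⟨hdet, hdet', hadj, hadj'⟩, hμ⟩ :=
    ((hgeneric.filter_mono (nhdsNE_le_cofinite 0)).and hsmall).exists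
  let s := √(1 - μ * μ)
  obtain ⟨τ, hτ, hleft, hright⟩ := ((eventually_cofinite_ne (0 : ℝ)).and <|
    (eventually_cofinite_crossTest_smul_right_ne_zero hadj u s).and <|
    eventually_cofinite_crossTest_smul_left_ne_zero (A := A.submatrix Sum.swap Sum.swap)
      hadj' v s).exists
  refine ⟨μ, s, τ, ?_, (Real.sqrt_pos.2 hμ).ne', hτ, hdet, hdet', hleft, ?_⟩
  · rw [Real.mul_self_sqrt hμ.le, add_sub_cancel]
  · rwa [leafExtension_swap]

lemma eventually_nhds_crossTest_ne_zero
    {L : Matrix ((V ⊕ Unit) ⊕ (W ⊕ Unit)) ((V ⊕ Unit) ⊕ (W ⊕ Unit)) ℝ} {u : V → ℝ} {v : W → ℝ}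
    (hu : ∀ i, crossTest u v L i ≠ 0)
    (hv : ∀ j, crossTest v u (L.submatrix Sum.swap Sum.swap) j ≠ 0) :
    ∀ᶠ M in 𝓝 L, (∀ x y, L x y ≠ 0 → M x y ≠ 0) ∧ (∀ i, crossTest u v M i ≠ 0) ∧
      ∀ j, crossTest v u (M.submatrix Sum.swap Sum.swap) j ≠ 0 := by
  refine .and ?_ (.and ?_ ?_)
  · exact eventually_all.2 fun x => eventually_all.2 fun y => eventually_imp_distrib_left.2
      (continuous_id.matrix_elem x y).continuousAt.eventually_ne
  · exact eventually_all.2 fun i => ((continuous_apply i).comp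
      (continuous_crossTest u v)).continuousAt.eventually_ne (hu i)
  · exact eventually_all.2 fun j => ((continuous_apply j).comp ((continuous_crossTest v u).comp
      (continuous_id.matrix_submatrix _ _))).continuousAt.eventually_ne (hv j)

lemma inS_graphJoin_pendant {G : SimpleGraph V} {H : SimpleGraph W} {A : Matrix (V ⊕ W) (V ⊕ W) ℝ}
    (hA : inS (graphJoin G H) A) {μ s t : ℝ} (hs : s ≠ 0) (ht : t ≠ 0) {u : V → ℝ} {v : W → ℝ}
    {w : V} {z : W} (hu : ∀ i, u i ≠ 0 ↔ i = w) (hv : ∀ j, v j ≠ 0 ↔ j = z)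
    {M : Matrix ((V ⊕ Unit) ⊕ (W ⊕ Unit)) ((V ⊕ Unit) ⊕ (W ⊕ Unit)) ℝ} (hM : M.IsSymm)
    (hsq : M * M = 1) (hLM : ∀ x y, leafExtension A μ s x y ≠ 0 → M x y ≠ 0)
    (hMY : ∀ x y, (graphJoin (G ⊕g (⊥ : SimpleGraph Unit)) (H ⊕g (⊥ : SimpleGraph Unit)))ᶜ.Adj x y →
      M x y = t * leafDirection u v x y)
    (hcross : ∀ i, crossTest u v M i ≠ 0)
    (hcross' : ∀ j, crossTest v u (M.submatrix Sum.swap Sum.swap) j ≠ 0) :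
    inS (graphJoin (pendant G w) (pendant H z)) M := by
  have hne : ∀ x y, (graphJoin G H).Adj x y → A x y ≠ 0 := fun x y h => (hA.2 x y h.ne).2 h
  have hMu : ∀ i, M (.inl (.inl i)) (.inl (.inr ())) = t * u i := fun i => hMY _ _ (by simp)
  have hMv : ∀ j, M (.inr (.inl j)) (.inr (.inr ())) = t * v j := fun j => hMY _ _ (by simp)
  have hsq' : M.submatrix Sum.swap Sum.swap * M.submatrix Sum.swap Sum.swap = 1 :=
    submatrix_mul_self_eq_one (Equiv.sumComm _ _) hsq
  have hMG : inS G M.toBlocks₁₁.toBlocks₁₁ :=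
    inS_of_adj_of_compl_adj (hM.submatrix _)
      (fun i j h => hLM _ _ (hne (.inl i) (.inl j) (by simpa using h)))
      fun i j h => (hMY _ _ (by simpa using h)).trans (mul_zero t)
  have hMH : inS H M.toBlocks₂₂.toBlocks₁₁ :=
    inS_of_adj_of_compl_adj (hM.submatrix _)
      (fun i j h => hLM _ _ (hne (.inr i) (.inr j) (by simpa using h)))
      fun i j h => (hMY _ _ (by simpa using h)).trans (mul_zero t)
  refine inS_graphJoin hM (inS_pendant (hM.submatrix _) hMG fun i => ?_)
    (inS_pendant (hM.submatrix _) hMH fun j => ?_) ?_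
  · rw [toBlocks₁₁, of_apply, hMu, mul_ne_zero_iff_left ht, hu]
  · rw [toBlocks₂₂, of_apply, hMv, mul_ne_zero_iff_left ht, hv]
  · rintro (i | ⟨⟩) (j | ⟨⟩)
    · exact hLM _ _ (hne (.inl i) (.inr j) (by simp))
    · exact ne_zero_of_crossTest_ne_zero hsq ht hMu hMv (hcross i)
    · rw [hM.apply]
      exact ne_zero_of_crossTest_ne_zero hsq' ht hMv hMu (hcross' j)
    · exact hLM _ _ (by simpa [leafExtension] using hs)

theorem HasSSPInvolution.graphJoin_pendant {G : SimpleGraph V} {H : SimpleGraph W}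
    (hGH : HasSSPInvolution (graphJoin G H)) (w : V) (z : W) :
    HasSSPInvolution (graphJoin (pendant G w) (pendant H z)) := by
  obtain ⟨A, hA, hsq, hssp⟩ := hGH
  have hA₁₂ : ∀ v, (A.toBlocks₁₂ *ᵥ Pi.single z 1) v ≠ 0 := fun v => by
    rw [mulVec_single_one]
    exact (hA.2 (.inl v) (.inr z) (by simp)).2 (by simp)
  have hA₂₁ : ∀ v, (A.toBlocks₂₁ *ᵥ Pi.single w 1) v ≠ 0 := fun v => by
    rw [mulVec_single_one]
    exact (hA.2 (.inr v) (.inl w) (by simp)).2 (by simp)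
  obtain ⟨μ, s, τ, hμs, hs, hτ, hdet, hdet', hcross, hcross'⟩ :=
    exists_crossTest_leafExtension_ne_zero hA₁₂ hA₂₁
  have hsspL := hasSSPFor_leafExtension hssp s hdet hdet'
  obtain ⟨t, ht, M, ⟨⟨hLM, hMcross, hMcross'⟩, hsspM⟩, hM, hMsq, hMY⟩ :=
    exists_involution_mem_of_hasSSPFor (isSymm_leafExtension hA.1 μ s)
      (leafExtension_mul_self hsq hμs) hsspL
      ((eventually_nhds_crossTest_ne_zero hcross hcross').and
        ((isOpen_setOf_hasSSPFor _).mem_nhds hsspL))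
      (leafDirection_mem_nonEdgeMatrices G H (Pi.single w 1) (τ • Pi.single z 1))
  refine ⟨M, inS_graphJoin_pendant hA hs ht (fun i => ?_) (fun j => ?_) hM hMsq hLM
    (fun x y hxy => ?_) hMcross hMcross', hMsq, hsspM.mono (graphJoin_mono le_sup_left le_sup_left)⟩
  · simp [Pi.single_apply]
  · simp [Pi.single_apply, hτ]
  · rw [hMY x y hxy, leafExtension_eq_zero hA μ s hxy, zero_add]

end Pendant

section CompleteMinusEdge

lemma hasSSPFor_deleteEdges {V : Type*} [Fintype V] {a b k : V} (hka : k ≠ a) (hkb : k ≠ b)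
    {A : Matrix V V ℝ} (hA : A b k ≠ 0) :
    HasSSPFor ((⊤ : SimpleGraph V).deleteEdges {s(a, b)}) A := by
  intro X ⟨hX, hsupp⟩ hcomm
  have hzero : ∀ i j, s(i, j) ≠ s(a, b) → X i j = 0 := fun i j hij =>
    hsupp i j fun h => h.2 <| (SimpleGraph.deleteEdges_adj).2 ⟨h.1, hij⟩
  have hXA : (X * A) a k = X a b * A b k := by
    rw [mul_apply]
    refine Fintype.sum_eq_single b fun j hj => ?_
    rw [hzero a j (by grind), zero_mul]
  have hAX : (A * X) a k = 0 := by
    rw [mul_apply]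
    refine Finset.sum_eq_zero fun j _ => ?_
    rw [hzero j k (by grind), mul_zero]
  have hab : X a b = 0 := by
    have hentry := congrFun₂ (sub_eq_zero.1 hcomm) a k
    rw [hXA, hAX] at hentry
    exact (mul_eq_zero.1 hentry).resolve_right hA
  ext i j
  by_cases hij : s(i, j) = s(a, b)
  · rcases Sym2.eq_iff.1 hij with ⟨rfl, rfl⟩ | ⟨rfl, rfl⟩
    · exact hab
    · exact (hX.apply j i).trans hab
  · exact hzero i j hij

lemma hasSSPInvolution_deleteEdges_fin_four :
    HasSSPInvolution ((⊤ : SimpleGraph (Fin 4)).deleteEdges {s(0, 1)}) := by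
  let A : Matrix (Fin 4) (Fin 4) ℝ :=
    (1 / 3 : ℝ) • !![1, 0, 2, 2; 0, -1, 2, -2; 2, 2, 0, -1; 2, -2, -1, 0]
  refine ⟨A, ⟨?_, ?_⟩, ?_, hasSSPFor_deleteEdges (k := 2) (by simp) (by simp) (by simp [A])⟩
  · ext i j
    fin_cases i <;> fin_cases j <;> simp [A]
  · intro i j hij
    fin_cases i <;> fin_cases j <;> simp [A] at hij ⊢
  · ext i j
    fin_cases i <;> fin_cases j <;> norm_num [A, mul_apply, Fin.sum_univ_succ]

lemma hasSSPInvolution_deleteEdges {V : Type*} [Fintype V] [DecidableEq V] (hV : Fintype.card V = 4)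
    {a b : V} (hab : a ≠ b) :
    HasSSPInvolution ((⊤ : SimpleGraph V).deleteEdges {s(a, b)}) := by
  let e := Fintype.equivFinOfCardEq hV
  obtain ⟨g, hga, hgb⟩ := MulAction.is_two_pretransitive_iff.1
    (Equiv.Perm.isMultiplyPretransitive (Fin 4) 2) (e.injective.ne hab) (zero_ne_one (α := Fin 4))
  refine hasSSPInvolution_deleteEdges_fin_four.of_iso ⟨e.trans g, fun {i j} => ?_⟩
  have hedge : s(g (e i), g (e j)) = s(0, 1) ↔ s(i, j) = s(a, b) := by
    rw [← hga, ← hgb]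
    exact (Sym2.map.injective (g.injective.comp e.injective)).eq_iff (a := s(i, j)) (b := s(a, b))
  simp [SimpleGraph.deleteEdges_adj, hedge]

end CompleteMinusEdge

section Trees

variable {V W : Type*}

lemma exists_iso_pendant_of_isTree [Finite V] [Nontrivial V] {T : SimpleGraph V}
    (hT : T.IsTree) :
    ∃ (l : V) (w : ({l}ᶜ : Set V)), (T.induce {l}ᶜ).IsTree ∧
      Nonempty (T ≃g pendant (T.induce {l}ᶜ) w) := by
  classical
  have := Fintype.ofFinite V
  obtain ⟨l, hl⟩ := hT.exists_vert_degree_one_of_nontrivial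
  obtain ⟨w, hw, huniq⟩ := SimpleGraph.degree_eq_one_iff_existsUnique_adj.1 hl
  let w' : ({l}ᶜ : Set V) := ⟨w, hw.ne'⟩
  have hadj : ∀ v : ({l}ᶜ : Set V), T.Adj l v ↔ v = w' := fun v =>
    ⟨fun h => Subtype.ext (huniq v h), fun h => h ▸ hw⟩
  refine ⟨l, w', ⟨hT.connected.induce_compl_singleton_of_degree_eq_one hl,
    hT.isAcyclic.induce _⟩, ⟨RelIso.symm ⟨(Equiv.optionEquivSumPUnit _).symm.trans
      (Equiv.optionSubtypeNe l), ?_⟩⟩⟩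
  rintro (v | ⟨⟩) (v' | ⟨⟩)
  · exact (pendant_adj_inl_inl (T.induce {l}ᶜ) _).symm
  · exact (T.adj_comm _ _).trans ((hadj v).trans (pendant_adj_inl_inr (T.induce {l}ᶜ) _).symm)
  · exact (hadj v').trans (pendant_adj_inr_inl (T.induce {l}ᶜ) _).symm
  · simp

variable [Fintype V] [Fintype W]

lemma eq_top_of_connected_of_card_le_two {G : SimpleGraph V} (hG : G.Connected)
    (hV : Fintype.card V ≤ 2) : G = ⊤ := by
  classical
  ext v w
  refine ⟨SimpleGraph.Adj.ne, fun hvw => ?_⟩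
  have : Nontrivial V := ⟨v, w, hvw⟩
  obtain ⟨k, hk⟩ := hG.preconnected.exists_adj_of_nontrivial v
  have hkw : k = w := by
    by_contra hkw
    have h3 : ({v, k, w} : Finset V).card ≤ 2 := (Finset.card_le_univ _).trans hV
    rw [Finset.card_eq_three.2 ⟨v, k, w, hk.ne, hvw, hkw, rfl⟩] at h3
    omega
  rwa [← hkw]

variable [DecidableEq V] [DecidableEq W]

lemma hasSSPInvolution_graphJoin_pendant_top (hV : Fintype.card V = 2) (hW : Fintype.card W = 1)
    (w : V) : HasSSPInvolution (graphJoin (pendant (⊤ : SimpleGraph V) w) (⊤ : SimpleGraph W)) := by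
  have : Subsingleton W := Fintype.card_le_one_iff_subsingleton.1 hW.le
  obtain ⟨u, hu, huniq⟩ := (Nat.card_eq_two_iff' w).1 (Nat.card_eq_fintype_card.trans hV)
  have hw : ∀ v, v = w ↔ v ≠ u := fun v =>
    ⟨fun h => h.trans_ne hu.symm, fun h => not_not.1 (mt (huniq v) h)⟩
  have hgraph : graphJoin (pendant (⊤ : SimpleGraph V) w) (⊤ : SimpleGraph W) =
      (⊤ : SimpleGraph ((V ⊕ Unit) ⊕ W)).deleteEdges {s(.inl (.inl u), .inl (.inr ()))} := by
    ext ((v | _) | _) ((v' | _) | _) <;> simp [hw]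
  rw [hgraph]
  exact hasSSPInvolution_deleteEdges (by simp [hV, hW]) (by simp)

end Trees

theorem hasSSPInvolution_graphJoin_of_isTree {V W : Type*} [Fintype V] [DecidableEq V] [Fintype W]
    [DecidableEq W] {T₁ : SimpleGraph V} {T₂ : SimpleGraph W} (h₁ : T₁.IsTree) (h₂ : T₂.IsTree)
    (hle : Fintype.card W ≤ Fintype.card V) (hle' : Fintype.card V ≤ Fintype.card W + 2) :
    HasSSPInvolution (graphJoin T₁ T₂) := by
  have := h₁.connected.nonempty
  have hW : 0 < Fintype.card W := Fintype.card_pos_iff.2 h₂.connected.nonempty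
  by_cases hV₂ : Fintype.card V ≤ 2
  · rw [eq_top_of_connected_of_card_le_two h₁.connected hV₂,
      eq_top_of_connected_of_card_le_two h₂.connected (hle.trans hV₂), graphJoin_top]
    exact hasSSPInvolution_top
  have : Nontrivial V := Fintype.one_lt_card_iff_nontrivial.1 (by omega)
  obtain ⟨l, w, hT₁, ⟨e⟩⟩ := exists_iso_pendant_of_isTree h₁
  have hcard₁ : Fintype.card ({l}ᶜ : Set V) = Fintype.card V - 1 := by
    rw [Fintype.card_compl_set, Set.card_singleton]
  by_cases hW₁ : Fintype.card W = 1
  · rw [eq_top_of_connected_of_card_le_two h₂.connected (by omega)]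
    rw [eq_top_of_connected_of_card_le_two hT₁.connected (by omega)] at e
    exact (hasSSPInvolution_graphJoin_pendant_top (by omega) hW₁ w).of_iso
      (graphJoinCongr e .refl)
  · have : Nontrivial W := Fintype.one_lt_card_iff_nontrivial.1 (by omega)
    obtain ⟨m, z, hT₂, ⟨f⟩⟩ := exists_iso_pendant_of_isTree h₂
    have hcard₂ : Fintype.card ({m}ᶜ : Set W) = Fintype.card W - 1 := by
      rw [Fintype.card_compl_set, Set.card_singleton]
    have hjoin := hasSSPInvolution_graphJoin_of_isTree hT₁ hT₂ (by omega) (by omega)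
    exact (hjoin.graphJoin_pendant w z).of_iso (graphJoinCongr e f)
termination_by Fintype.card V
decreasing_by omega

theorem statement11_general {V W : Type*} [Fintype V] [DecidableEq V] [Fintype W] [DecidableEq W]
    (T₁ : SimpleGraph V) (T₂ : SimpleGraph W) (h₁ : T₁.IsTree) (h₂ : T₂.IsTree) :
    qGraph (graphJoin T₁ T₂) = 2 ↔
      Fintype.card V ≤ Fintype.card W + 2 ∧ Fintype.card W ≤ Fintype.card V + 2 := by
  have := h₁.connected.nonempty
  have := h₂.connected.nonempty
  have hne := graphJoin_ne_bot T₁ T₂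
  refine ⟨fun hq => ?_, fun ⟨hVW, hWV⟩ => ?_⟩
  · obtain ⟨A, hA, hsq⟩ := (qGraph_eq_two_iff hne).1 hq
    exact ⟨card_le_card_add_two_of_inS_graphJoin h₁ hA hsq,
      card_le_card_add_two_of_inS_graphJoin h₂ (hA.submatrix_iso (graphJoinComm T₂ T₁))
        (submatrix_mul_self_eq_one (graphJoinComm T₂ T₁).toEquiv hsq)⟩
  · refine HasSSPInvolution.qGraph_eq_two hne ?_
    rcases le_total (Fintype.card W) (Fintype.card V) with hle | hle
    · exact hasSSPInvolution_graphJoin_of_isTree h₁ h₂ hle hVW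
    · exact (hasSSPInvolution_graphJoin_of_isTree h₂ h₁ hle hWV).of_iso (graphJoinComm T₁ T₂)

/-- Example 3.5, last part: for trees `T₁, T₂`,
`q(T₁ ∨ T₂) = 2` iff `||T₁| − |T₂|| ≤ 2`. -/
theorem statement11 (a b : ℕ)
    (T₁ : SimpleGraph (Fin a)) (T₂ : SimpleGraph (Fin b))
    (h₁ : T₁.IsTree) (h₂ : T₂.IsTree) :
    qGraph (graphJoin T₁ T₂) = 2 ↔ (a ≤ b + 2 ∧ b ≤ a + 2) := by
  simpa only [Fintype.card_fin] using statement11_general T₁ T₂ h₁ h₂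
end

section
/- Let G be a simple graph, let V(G) = V₁ ∪ V₂ be a partition of its vertex set, and let X ⊆ V₁ be the vertex boundary of V₂ in G. Let H be a connected graph with |H| ≥ |V₂|, and let G' := (G[V₁], X) ∨ H. Suppose there exists M ∈ S(G) such that the principal submatrix M[V₂] has distinct eigenvalues λ₁,…,λ_{|V₂|}. Let t = |H| − |V₂| and let μ₁,…,μ_t be any distinct real numbers with μ_i ≠ λ_j for all i ∈ {1,…,t} and j ∈ {1,…,|V₂|}. Then there exists N ∈ S(G') with spectrum σ(N) = σ(M) ∪ {μ₁,…,μ_t} (as multisets). -/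
open Matrix Filter

/-!
After an orthogonal change of basis on `V₂`, the matrix `M` becomes `[[A, C], [Cᵀ, Λ]]` with `Λ`
diagonal with simple spectrum. Bordering by `diag(μ)` adds the eigenvalues `μᵢ`, and conjugating the
enlarged diagonal block `Λ'` by an orthogonal `U` changes `C` to `C Uᵀ` without changing the
spectrum. It remains to choose `U` so that `U Λ' Uᵀ ∈ S(H)` and `U y` has no zero entry for each
nonzero row `y` of `C`.

Since `Λ'` is simple, the implicit function theorem yields, analytically in a small symmetric hollow
matrix `T`, an orthogonal `W(T)` with `W(0) = 1` such that `W Λ' Wᵀ` has the off-diagonal entries of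
`T`. Let `T` range over the weighted adjacency matrices of `H`. Each entry `(W y)ᵢ` is an analytic
function of the weights, hence generically nonzero as soon as it does not vanish identically; to see
that it does not, put weight on a shortest path from `i` to the support of `y` only: a nonzero
eigenvector of a matrix whose graph is a path has nonzero entries at both ends of the path.
-/

section Conjugation

variable {R α β τ : Type*} [CommRing R] [Fintype α] [DecidableEq α] [Fintype β] [DecidableEq β]
  [Fintype τ] [DecidableEq τ]

theorem orthogonal_conj_mul_self {U K : Matrix α α R} (hU : U * Uᵀ = 1) :
    U * K * Uᵀ * U = U * K := by
  rw [Matrix.mul_assoc, mul_eq_one_comm.1 hU, mul_one]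

theorem charpoly_orthogonal_conj {U : Matrix α α R} (hU : U * Uᵀ = 1) (K : Matrix α α R) :
    (U * K * Uᵀ).charpoly = K.charpoly := by
  rw [charpoly_mul_comm, ← Matrix.mul_assoc, mul_eq_one_comm.1 hU, one_mul]

theorem charpoly_fromBlocks_orthogonal_conj {U : Matrix β β R} (hU : U * Uᵀ = 1) (A : Matrix α α R)
    (B : Matrix α β R) (K : Matrix β β R) :
    (fromBlocks A (B * Uᵀ) (B * Uᵀ)ᵀ (U * K * Uᵀ)).charpoly = (fromBlocks A B Bᵀ K).charpoly := by
  have hR : fromBlocks 1 0 0 U * (fromBlocks 1 0 0 U : Matrix (α ⊕ β) (α ⊕ β) R)ᵀ = 1 := by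
    simp [fromBlocks_transpose, fromBlocks_multiply, hU]
  rw [← charpoly_orthogonal_conj hR (fromBlocks A B Bᵀ K)]
  simp [fromBlocks_transpose, fromBlocks_multiply]

theorem charpoly_eq_of_toBlocks₂₂_eq_orthogonal_conj {M : Matrix (α ⊕ β) (α ⊕ β) R}
    (hM : M.IsSymm) {Q K : Matrix β β R} (hQ : Q * Qᵀ = 1) (hK : M.toBlocks₂₂ = Q * K * Qᵀ) :
    M.charpoly =
      (fromBlocks M.toBlocks₁₁ (M.toBlocks₁₂ * Q) (M.toBlocks₁₂ * Q)ᵀ K).charpoly := by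
  have htranspose : M.toBlocks₁₂ᵀ = M.toBlocks₂₁ := congr_arg toBlocks₂₁ hM
  rw [← charpoly_fromBlocks_orthogonal_conj hQ, Matrix.mul_assoc, hQ, Matrix.mul_one, ← hK,
    htranspose, fromBlocks_toBlocks]

theorem charpoly_fromBlocks_fromCols_zero (A : Matrix α α R) (B : Matrix α β R)
    (K : Matrix β β R) (L : Matrix τ τ R) :
    (fromBlocks A (fromCols B 0) (fromCols B 0)ᵀ (fromBlocks K 0 0 L)).charpoly =
      (fromBlocks A B Bᵀ K).charpoly * L.charpoly := by
  rw [← charpoly_fromBlocks_zero₁₂ (M₂₁ := 0), ← charpoly_reindex (Equiv.sumAssoc α β τ)]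
  congr 1
  ext (i | i | i) (j | j | j) <;> simp

end Conjugation

section AnalyticGerms

open Topology

variable {E : Type*} [NormedAddCommGroup E] [NormedSpace ℝ E]

theorem frequently_mul_ne_zero_of_analyticAt {f g : E → ℝ} {x₀ : E} (hf : AnalyticAt ℝ f x₀)
    (hg : AnalyticAt ℝ g x₀) (hf₀ : ∃ᶠ x in 𝓝 x₀, f x ≠ 0) (hg₀ : ∃ᶠ x in 𝓝 x₀, g x ≠ 0) :
    ∃ᶠ x in 𝓝 x₀, f x * g x ≠ 0 := by
  intro hfg
  simp only [not_not] at hfg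
  obtain ⟨r, hr, hball⟩ := Metric.eventually_nhds_iff_ball.1
    (hfg.and (hf.eventually_analyticAt.and hg.eventually_analyticAt))
  obtain ⟨x, hfx, hx⟩ := (hf₀.and_eventually (Metric.ball_mem_nhds x₀ hr)).exists
  have hg_near_x : g =ᶠ[𝓝 x] 0 := by
    filter_upwards [(hball x hx).2.1.continuousAt.eventually_ne hfx, Metric.isOpen_ball.mem_nhds hx]
      with z hfz hz
    exact (mul_eq_zero.1 (hball z hz).1).resolve_left hfz
  have hg_ball : Set.EqOn g 0 (Metric.ball x₀ r) :=
    AnalyticOnNhd.eqOn_zero_of_preconnected_of_eventuallyEq_zero (fun z hz => (hball z hz).2.2)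
      (convex_ball x₀ r).isPreconnected hx hg_near_x
  exact hg₀ (by filter_upwards [Metric.ball_mem_nhds x₀ hr] with z hz using not_not.2 (hg_ball hz))

theorem frequently_forall_ne_zero_of_analyticAt {ι : Type*} [Finite ι] {f : ι → E → ℝ} {x₀ : E}
    (hf : ∀ k, AnalyticAt ℝ (f k) x₀) (hf₀ : ∀ k, ∃ᶠ x in 𝓝 x₀, f k x ≠ 0) :
    ∃ᶠ x in 𝓝 x₀, ∀ k, f k x ≠ 0 := by
  have := Fintype.ofFinite ι
  suffices h : ∀ s : Finset ι, ∃ᶠ x in 𝓝 x₀, ∏ k ∈ s, f k x ≠ 0 by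
    simpa [Finset.prod_ne_zero_iff] using h Finset.univ
  classical
  intro s
  induction s using Finset.induction_on with
  | empty => simp
  | insert k s hk ih =>
    simp only [Finset.prod_insert hk]
    exact frequently_mul_ne_zero_of_analyticAt (hf k) (Finset.analyticAt_fun_prod s fun j _ => hf j)
      (hf₀ k) ih

open scoped ContDiff in
theorem exists_analyticAt_rightInverse_of_injective_fderiv [FiniteDimensional ℝ E] {F : E → E}
    {a : E} {F' : E →L[ℝ] E} (hF : AnalyticAt ℝ F a) (hF' : HasFDerivAt F F' a)
    (hinj : Function.Injective F') :
    ∃ g : E → E, AnalyticAt ℝ g (F a) ∧ g (F a) = a ∧ ∀ᶠ z in 𝓝 (F a), F (g z) = z := by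
  have := FiniteDimensional.complete ℝ E
  let e : E ≃L[ℝ] E := (LinearEquiv.ofInjectiveEndo F'.toLinearMap hinj).toContinuousLinearEquiv
  have he : HasFDerivAt F (e : E →L[ℝ] E) a := hF'
  have hF : ContDiffAt ℝ ω F a := hF.contDiffAt
  exact ⟨hF.localInverse he (by simp), (hF.to_localInverse he _).analyticAt,
    hF.localInverse_apply_image he _,
    (hF.hasStrictFDerivAt' he (by simp)).eventually_right_inverse⟩

theorem exists_analyticAt_rightInverse_of_bilinear [FiniteDimensional ℝ E] (B : E →ₗ[ℝ] E →ₗ[ℝ] E)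
    {a : E} (hB : ∀ D, B a D + B D a = 0 → D = 0) :
    ∃ g : E → E, AnalyticAt ℝ g (B a a) ∧ g (B a a) = a ∧
      ∀ᶠ z in 𝓝 (B a a), B (g z) (g z) = z := by
  let Bc : E →L[ℝ] E →L[ℝ] E := B.toContinuousBilinearMap
  have hF : AnalyticAt ℝ (fun W => Bc W W) a :=
    (Bc.analyticAt_bilinear (a, a)).comp₂ analyticAt_id analyticAt_id
  have hF' := Bc.hasFDerivAt_of_bilinear (hasFDerivAt_id (𝕜 := ℝ) a) (hasFDerivAt_id a)
  exact exists_analyticAt_rightInverse_of_injective_fderiv hF hF' <|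
    (injective_iff_map_eq_zero _).2 fun D hD => hB D hD

end AnalyticGerms

section IsospectralForm

open Topology

variable {V : Type*} [Fintype V] [DecidableEq V]

/-- The quadratic map `W ↦ W Wᵀ + [Λ, W Λ Wᵀ]` with `Λ = diagonal l`, as a bilinear form; the
commutator is written as the Hadamard product with the matrix of gaps `l i - l j`. Adding the
symmetric `W Wᵀ` to the antisymmetric commutator packs orthogonality of `W` and the off-diagonal
entries of the isospectral matrix `W Λ Wᵀ` into a square system of equations. -/
def isospectralForm (l : V → ℝ) : Matrix V V ℝ →ₗ[ℝ] Matrix V V ℝ →ₗ[ℝ] Matrix V V ℝ :=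
  LinearMap.mk₂ ℝ (fun W W' => W * W'ᵀ + (of fun i j => l i - l j) ⊙ (W * diagonal l * W'ᵀ))
    (fun _ _ _ => by simp only [add_mul, hadamard_add]; abel)
    (fun _ _ _ => by simp only [smul_mul, hadamard_smul, smul_add])
    (fun _ _ _ => by simp only [transpose_add, mul_add, hadamard_add]; abel)
    (fun _ _ _ => by simp only [transpose_smul, Matrix.mul_smul, hadamard_smul, smul_add])

theorem isospectralForm_apply (l : V → ℝ) (W W' : Matrix V V ℝ) (i j : V) :
    isospectralForm l W W' i j = (W * W'ᵀ) i j + (l i - l j) * (W * diagonal l * W'ᵀ) i j :=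
  rfl

theorem isospectralForm_one_one (l : V → ℝ) : isospectralForm l 1 1 = 1 := by
  ext i j
  rcases eq_or_ne i j with rfl | hij
  · simp [isospectralForm_apply]
  · simp [isospectralForm_apply, hij]

theorem eq_zero_of_isospectralForm_one_add_eq_zero {l : V → ℝ} (hl : Function.Injective l)
    {D : Matrix V V ℝ} (hD : isospectralForm l 1 D + isospectralForm l D 1 = 0) : D = 0 := by
  have hent (i j) : D i j + D j i + (l i - l j) * (D i j * l j + l i * D j i) = 0 := by
    have h := congr($hD i j)
    simp only [Matrix.add_apply, isospectralForm_apply, one_mul, transpose_one, mul_one,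
      diagonal_mul, mul_diagonal, transpose_apply, Matrix.zero_apply] at h
    linear_combination h
  have hskew (i j) : D j i = -D i j := by linear_combination (hent i j + hent j i) / 2
  ext i j
  rcases eq_or_ne i j with rfl | hij
  · rw [Matrix.zero_apply]
    linarith [hskew i i]
  · have hsq : (l i - l j) ^ 2 * D i j = 0 := by
      linear_combination -hent i j + (1 + (l i - l j) * l i) * hskew i j
    simpa [sub_ne_zero.2 (hl.ne hij)] using hsq

theorem mul_transpose_eq_one_and_offDiag_eq_of_isospectralForm {l : V → ℝ}
    (hl : Function.Injective l) {W T : Matrix V V ℝ} (hT : T.IsSymm)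
    (h : isospectralForm l W W = 1 + (of fun i j => l i - l j) ⊙ T) :
    W * Wᵀ = 1 ∧ ∀ i j, i ≠ j → (W * diagonal l * Wᵀ) i j = T i j := by
  have hP : (W * Wᵀ).IsSymm := isSymm_mul_transpose_self W
  have hB : (W * diagonal l * Wᵀ).IsSymm := by simp [IsSymm, Matrix.mul_assoc]
  have hent (i j) := congr($h i j)
  simp only [isospectralForm_apply, Matrix.add_apply, hadamard_apply, of_apply] at hent
  have hswap (i j) := hent j i
  simp only [hP.apply _ _, hB.apply _ _, hT.apply _ _, isSymm_one.apply _ _] at hswap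
  constructor
  · ext i j
    linear_combination (hent i j + hswap i j) / 2
  · intro i j hij
    apply mul_left_cancel₀ (sub_ne_zero.2 (hl.ne hij))
    linear_combination (hent i j - hswap i j) / 2

open scoped Matrix.Norms.Elementwise in
theorem exists_analyticAt_orthogonal_offDiag_eq {l : V → ℝ} (hl : Function.Injective l) :
    ∃ g : Matrix V V ℝ → Matrix V V ℝ, AnalyticAt ℝ g 0 ∧ g 0 = 1 ∧
      ∀ᶠ T in 𝓝 0, T.IsSymm → g T * (g T)ᵀ = 1 ∧
        ∀ i j, i ≠ j → (g T * diagonal l * (g T)ᵀ) i j = T i j := by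
  obtain ⟨g, hg, hg₁, hinv⟩ := exists_analyticAt_rightInverse_of_bilinear (isospectralForm l)
    fun _ => eq_zero_of_isospectralForm_one_add_eq_zero hl
  let gap : Matrix V V ℝ := of fun i j => l i - l j
  let gapHadamard : Matrix V V ℝ →ₗ[ℝ] Matrix V V ℝ :=
    ⟨⟨(gap ⊙ ·), fun _ _ => hadamard_add _ _ _⟩, fun _ _ => hadamard_smul _ _ _⟩
  have hshift : AnalyticAt ℝ (fun T => 1 + gap ⊙ T) 0 :=
    analyticAt_const.add (gapHadamard.toContinuousLinearMap.analyticAt 0)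
  have hzero : 1 + gap ⊙ 0 = isospectralForm l 1 1 := by
    rw [hadamard_zero, add_zero, isospectralForm_one_one]
  refine ⟨fun T => g (1 + gap ⊙ T), hg.comp_of_eq hshift hzero, by simpa only [hzero] using hg₁, ?_⟩
  filter_upwards [hshift.continuousAt.eventually (hzero ▸ hinv)] with T hT hsymm
  exact mul_transpose_eq_one_and_offDiag_eq_of_isospectralForm hl hsymm hT

end IsospectralForm

section Paths

variable {V : Type*} {H : SimpleGraph V}

theorem exists_isPath_support_forall_eq_zero {R : Type*} [Zero R] (hH : H.Connected) {y : V → R}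
    (hy : y ≠ 0) (u : V) :
    ∃ v, ∃ p : H.Walk u v, p.IsPath ∧ y v ≠ 0 ∧ ∀ q ∈ p.support, q ≠ v → y q = 0 := by
  classical
  obtain ⟨v, hv, hmin⟩ := exists_minimalFor_of_wellFoundedLT (fun v => y v ≠ 0) (H.dist u)
    (Function.ne_iff.1 hy)
  obtain ⟨p, hp, hlen⟩ := hH.exists_path_of_dist u v
  refine ⟨v, p, hp, hv, fun q hq hqv => by_contra fun hyq => ?_⟩
  have hlt : H.dist u q < H.dist u v := calc
    H.dist u q ≤ (p.takeUntil q hq).length := SimpleGraph.dist_le _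
    _ < p.length := SimpleGraph.Walk.length_takeUntil_lt_length hq hqv
    _ = H.dist u v := hlen
  exact hlt.not_ge (hmin hyq hlt.le)

variable {R : Type*} [CommRing R] [NoZeroDivisors R] [Fintype V]

-- `hoff` asks for `A a b * c b = 0` rather than `A a b = 0` so that it passes to the tail of the
-- path: the edge back to the first vertex survives there, but `c` vanishes at that vertex.
theorem apply_eq_zero_of_isPath {A : Matrix V V R} {c : V → R} {r : R} (hAc : A *ᵥ c = r • c)
    {u v : V} {p : H.Walk u v} (hp : p.IsPath)
    (hedge : ∀ a b, s(a, b) ∈ p.edges → A a b ≠ 0)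
    (hoff : ∀ a ∈ p.support, ∀ b, b ≠ a → s(a, b) ∉ p.edges → A a b * c b = 0)
    (hu : c u = 0) : c v = 0 := by
  induction p with
  | nil => exact hu
  | @cons u w v huw p ih =>
    obtain ⟨hp, hup⟩ := (SimpleGraph.Walk.cons_isPath_iff _ _).1 hp
    simp only [SimpleGraph.Walk.edges_cons, SimpleGraph.Walk.support_cons, List.mem_cons,
      not_or] at hedge hoff
    have hrow : A u w * c w = 0 := by
      have hsum : ∑ b, A u b * c b = 0 := by
        simpa [mulVec, dotProduct, hu] using congr_fun hAc u
      rwa [Finset.sum_eq_single_of_mem w (Finset.mem_univ w)] at hsum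
      intro b _ hbw
      rcases eq_or_ne b u with rfl | hbu
      · rw [hu, mul_zero]
      · exact hoff u (Or.inl rfl) b hbu
          ⟨by simp [hbw, hbu], fun h => hup (p.fst_mem_support_of_mem_edges h)⟩
    have hw : c w = 0 := (mul_eq_zero.1 hrow).resolve_left (hedge u w (Or.inl rfl))
    refine ih hp (fun a b h => hedge a b (Or.inr h)) (fun a ha b hba hab => ?_) hw
    rcases eq_or_ne b u with rfl | hbu
    · rw [hu, mul_zero]
    · have hau : a ≠ u := fun h => hup (h ▸ ha)
      exact hoff a (Or.inr ha) b hba ⟨by simp [hau, hbu], hab⟩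

variable [DecidableEq V]

theorem apply_eq_zero_of_isolated {l : V → R} (hl : Function.Injective l) {A W : Matrix V V R}
    (hW : W * Wᵀ = 1) (hAW : A * W = W * diagonal l) {q : V} (hqq : W q q ≠ 0)
    (hq : ∀ b, b ≠ q → A q b = 0) {a : V} (ha : a ≠ q) : W a q = 0 := by
  have heig (b) : A q q * W q b = W q b * l b := by
    have h := congr($hAW q b)
    rwa [mul_apply, Finset.sum_eq_single_of_mem q (Finset.mem_univ q)
      fun c _ hc => by rw [hq c hc, zero_mul], mul_diagonal] at h
  have hAq : A q q = l q := mul_right_cancel₀ hqq (by rw [heig, mul_comm])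
  have hrow (b) (hb : b ≠ q) : W q b = 0 := by
    have h : (l q - l b) * W q b = 0 := by linear_combination heig b - W q b * hAq
    exact (mul_eq_zero.1 h).resolve_left (sub_ne_zero.2 (hl.ne hb.symm))
  have h : W a q * W q q = 0 := by
    have h := congr($hW a q)
    rwa [mul_apply, Finset.sum_eq_single_of_mem q (Finset.mem_univ q)
      fun b _ hb => by rw [transpose_apply, hrow b hb, mul_zero], one_apply_ne ha] at h
  exact (mul_eq_zero.1 h).resolve_right hqq

theorem mulVec_apply_ne_zero_of_isPath {l : V → R} (hl : Function.Injective l)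
    {A W : Matrix V V R} (hW : W * Wᵀ = 1) (hAW : A * W = W * diagonal l)
    (hdiag : ∀ q, W q q ≠ 0) {u v : V} {p : H.Walk u v} (hp : p.IsPath)
    (hA : ∀ a b, a ≠ b → (A a b ≠ 0 ↔ s(a, b) ∈ p.edges))
    {y : V → R} (hv : y v ≠ 0) (hy : ∀ q ∈ p.support, q ≠ v → y q = 0) : (W *ᵥ y) u ≠ 0 := by
  have hoff {q} (hq : q ∉ p.support) (b) (hb : b ≠ q) : A q b = 0 :=
    not_not.1 fun h => hq (p.fst_mem_support_of_mem_edges ((hA q b hb.symm).1 h))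
  have huq {q} (hq : q ∉ p.support) : W u q = 0 :=
    apply_eq_zero_of_isolated hl hW hAW (hdiag q) (hoff hq) fun h => hq (h ▸ p.start_mem_support)
  have huv : W u v ≠ 0 := by
    have heig : A *ᵥ W.col v = l v • W.col v := by
      ext a
      exact congr($hAW a v).trans (by simp [mul_comm])
    refine fun h => hdiag v (apply_eq_zero_of_isPath heig hp (fun a b hab => ?_)
      (fun a _ b hba hab => ?_) h)
    · exact (hA a b (p.adj_of_mem_edges hab).ne).2 hab
    · rw [not_not.1 ((hA a b hba.symm).not.2 hab), zero_mul]
  rw [mulVec, dotProduct, Finset.sum_eq_single_of_mem v (Finset.mem_univ v)]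
  · exact mul_ne_zero huv hv
  · intro q _ hqv
    by_cases hq : q ∈ p.support
    · rw [hy q hq hqv, mul_zero]
    · rw [huq hq, zero_mul]

end Paths

section WeightedAdjMatrix

variable {R V : Type*} [Semiring R] (H : SimpleGraph V)

/-- The weighted adjacency matrix of `H` for edge weights `x`; weights are given on all of `Sym2 V`
and those off the edges of `H` are ignored, so that the weights form a fixed vector space. -/
noncomputable def weightedAdjMatrix : (Sym2 V → R) →ₗ[R] Matrix V V R where
  toFun x := of fun i j => H.edgeSet.indicator x s(i, j)
  map_add' x x' := by ext i j; exact congr_fun (Set.indicator_add H.edgeSet x x') s(i, j)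
  map_smul' r x := by ext i j; exact congr_fun (Set.indicator_const_smul H.edgeSet r x) s(i, j)

variable {H}

theorem weightedAdjMatrix_apply (x : Sym2 V → R) (i j : V) :
    weightedAdjMatrix H x i j = H.edgeSet.indicator x s(i, j) := rfl

theorem weightedAdjMatrix_isSymm (x : Sym2 V → R) : (weightedAdjMatrix H x).IsSymm :=
  IsSymm.ext fun i j => by rw [weightedAdjMatrix_apply, weightedAdjMatrix_apply, Sym2.eq_swap]

theorem weightedAdjMatrix_apply_ne_zero_iff {x : Sym2 V → R} {i j : V} :
    weightedAdjMatrix H x i j ≠ 0 ↔ H.Adj i j ∧ x s(i, j) ≠ 0 := by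
  rw [weightedAdjMatrix_apply, Set.indicator_apply_ne_zero]; rfl

end WeightedAdjMatrix

section GenericRealization

open Topology

variable {V : Type*} [Fintype V] [DecidableEq V] {H : SimpleGraph V}

theorem tendsto_smul_nhdsNE_zero {E : Type*} [AddCommMonoid E] [Module ℝ E] [TopologicalSpace E]
    [ContinuousSMul ℝ E] (x : E) : Tendsto (fun t : ℝ => t • x) (𝓝[≠] 0) (𝓝 0) := by
  have h : Continuous fun t : ℝ => t • x := by fun_prop
  simpa only [zero_smul] using (h.tendsto 0).mono_left nhdsWithin_le_nhds

theorem frequently_mulVec_apply_ne_zero (hH : H.Connected) {l : V → ℝ}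
    (hl : Function.Injective l) {W : (Sym2 V → ℝ) → Matrix V V ℝ} (hW_cont : ContinuousAt W 0)
    (hW_zero : W 0 = 1)
    (hW : ∀ᶠ x in 𝓝 0, W x * (W x)ᵀ = 1 ∧
      ∀ i j, i ≠ j → (W x * diagonal l * (W x)ᵀ) i j = weightedAdjMatrix H x i j)
    {y : V → ℝ} (hy : y ≠ 0) (u : V) : ∃ᶠ x in 𝓝 0, (W x *ᵥ y) u ≠ 0 := by
  obtain ⟨v, p, hp, hv, hyp⟩ := exists_isPath_support_forall_eq_zero hH hy u
  have hdiag : ∀ᶠ x in 𝓝 0, ∀ q, W x q q ≠ 0 :=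
    eventually_all.2 fun q => ContinuousAt.eventually_ne
      ((continuous_apply_apply q q).continuousAt.comp hW_cont) (by simp [hW_zero])
  let pathWeight : Sym2 V → ℝ := {e | e ∈ p.edges}.indicator 1
  have htend := tendsto_smul_nhdsNE_zero pathWeight
  refine htend.frequently (Eventually.frequently ?_)
  filter_upwards [htend.eventually hW, htend.eventually hdiag, self_mem_nhdsWithin]
    with t ⟨horth, hoff⟩ hdiag ht
  refine mulVec_apply_ne_zero_of_isPath hl horth (orthogonal_conj_mul_self horth) hdiag hp
    (fun a b hab => ?_) hv hyp
  have hweight : (t • pathWeight) s(a, b) ≠ 0 ↔ s(a, b) ∈ p.edges := by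
    simpa [pathWeight] using fun _ => ht
  rw [hoff a b hab, weightedAdjMatrix_apply_ne_zero_iff, hweight]
  exact and_iff_right_of_imp p.adj_of_mem_edges

theorem exists_analyticAt_orthogonal_conj_eq_weightedAdjMatrix (H : SimpleGraph V) {l : V → ℝ}
    (hl : Function.Injective l) :
    ∃ W : (Sym2 V → ℝ) → Matrix V V ℝ, (∀ i j, AnalyticAt ℝ (W · i j) 0) ∧ W 0 = 1 ∧
      ∀ᶠ x in 𝓝 0, W x * (W x)ᵀ = 1 ∧
        ∀ i j, i ≠ j → (W x * diagonal l * (W x)ᵀ) i j = weightedAdjMatrix H x i j := by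
  open scoped Matrix.Norms.Elementwise in
  obtain ⟨g, hg, hg₀, hgT⟩ := exists_analyticAt_orthogonal_offDiag_eq hl
  have hT := (weightedAdjMatrix (R := ℝ) H).toContinuousLinearMap.analyticAt 0
  have hT₀ : weightedAdjMatrix H (0 : Sym2 V → ℝ) = 0 := map_zero _
  refine ⟨fun x => g (weightedAdjMatrix H x), fun i j => ?_, by simpa only [hT₀] using hg₀, ?_⟩
  · exact ((entryLinearMap ℝ ℝ i j).toContinuousLinearMap.analyticAt _).comp
      (hg.comp_of_eq hT hT₀)
  · filter_upwards [hT.continuousAt.eventually (hT₀ ▸ hgT)] with x hx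
    exact hx (weightedAdjMatrix_isSymm x)

theorem exists_orthogonal_conj_inS_forall_mulVec_ne_zero (hH : H.Connected) {l : V → ℝ}
    (hl : Function.Injective l) {ι : Type*} [Finite ι] (y : ι → V → ℝ) :
    ∃ U : Matrix V V ℝ, U * Uᵀ = 1 ∧ inS H (U * diagonal l * Uᵀ) ∧
      ∀ k, y k ≠ 0 → ∀ i, (U *ᵥ y k) i ≠ 0 := by
  obtain ⟨W, hW_an, hW₀, hW⟩ := exists_analyticAt_orthogonal_conj_eq_weightedAdjMatrix H hl
  have hW_cont : ContinuousAt W 0 :=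
    continuousAt_pi.2 fun i => continuousAt_pi.2 fun j => (hW_an i j).continuousAt
  -- The coordinates of `x` are among the functions to be nonzero, so that no edge of `H` is lost.
  have hgeneric : ∃ᶠ x in 𝓝 0, ∀ k : ({k // y k ≠ 0} × V) ⊕ Sym2 V,
      Sum.elim (fun k => (W x *ᵥ y k.1) k.2) x k ≠ 0 := by
    refine frequently_forall_ne_zero_of_analyticAt (fun k => ?_) fun k => ?_
    · rcases k with ⟨k, i⟩ | e
      · simp only [Sum.elim_inl, mulVec, dotProduct]
        fun_prop
      · exact (ContinuousLinearMap.proj (R := ℝ) (φ := fun _ => ℝ) e).analyticAt 0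
    · rcases k with ⟨k, i⟩ | e
      · exact frequently_mulVec_apply_ne_zero hH hl hW_cont hW₀ hW k.2 i
      · refine (tendsto_smul_nhdsNE_zero (1 : Sym2 V → ℝ)).frequently (Eventually.frequently ?_)
        filter_upwards [self_mem_nhdsWithin] with t ht
        simpa using ht
  obtain ⟨x, hx, horth, hoff⟩ := (hgeneric.and_eventually hW).exists
  refine ⟨W x, horth, ⟨by simp [IsSymm, Matrix.mul_assoc], fun i j hij => ?_⟩,
    fun k hk i => hx (.inl (⟨k, hk⟩, i))⟩
  rw [hoff i j hij, weightedAdjMatrix_apply_ne_zero_iff]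
  exact and_iff_left (hx (.inr s(i, j)))

end GenericRealization

section PartialJoin

variable {α η : Type*} {G : SimpleGraph α} {X : Set α} {H : SimpleGraph η}

theorem inS_partialJoin_fromBlocks {A : Matrix α α ℝ} {C : Matrix α η ℝ} {K : Matrix η η ℝ}
    (hA : inS G A) (hK : inS H K) (hC : ∀ a k, C a k ≠ 0 ↔ a ∈ X) :
    inS (partialJoin G X H) (fromBlocks A C Cᵀ K) := by
  refine ⟨hA.1.fromBlocks rfl hK.1, ?_⟩
  rintro (i | i) (j | j) hij
  · simpa [partialJoin] using hA.2 i j (ne_of_apply_ne _ hij)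
  · simpa [partialJoin] using hC i j
  · simpa [partialJoin] using hC j i
  · simpa [partialJoin] using hK.2 i j (ne_of_apply_ne _ hij)

variable {ε : Type*} [Fintype α] [DecidableEq α] [Fintype η] [DecidableEq η] [Fintype ε]
  [DecidableEq ε]

theorem exists_inS_partialJoin_charpoly_eq (hH : H.Connected)
    (hcard : Fintype.card η = Fintype.card ε) {A : Matrix α α ℝ} (hA : inS G A)
    (C : Matrix α ε ℝ) {d : ε → ℝ} (hd : Function.Injective d) :
    ∃ N, inS (partialJoin G {a | C a ≠ 0} H) N ∧
      N.charpoly = (fromBlocks A C Cᵀ (diagonal d)).charpoly := by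
  let e := Fintype.equivOfCardEq hcard
  let Ce := C.submatrix id e
  obtain ⟨U, hU, hUH, hUC⟩ :=
    exists_orthogonal_conj_inS_forall_mulVec_ne_zero hH (hd.comp e.injective) Ce
  have hCe (a) : Ce a = 0 ↔ C a = 0 :=
    ⟨fun h => funext fun k => by simpa [Ce] using congr_fun h (e.symm k),
      fun h => funext fun k => congr_fun h (e k)⟩
  refine ⟨fromBlocks A (Ce * Uᵀ) (Ce * Uᵀ)ᵀ (U * diagonal (d ∘ e) * Uᵀ),
    inS_partialJoin_fromBlocks hA hUH fun a k => ?_, ?_⟩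
  · have hmul : (Ce * Uᵀ) a k = (U *ᵥ Ce a) k := by
      simp [mul_apply, mulVec, dotProduct, mul_comm]
    rw [hmul, Set.mem_ofPred_eq, ne_eq (C a), ← hCe]
    exact ⟨fun h h₀ => h (by simp [h₀]), fun h => hUC a h k⟩
  · rw [charpoly_fromBlocks_orthogonal_conj hU,
      ← charpoly_reindex (Equiv.sumCongr (Equiv.refl α) e.symm)]
    congr 1
    ext (i | i) (j | j) <;> simp [Ce, diagonal_apply]

end PartialJoin

section Spectrum

variable {α β η τ : Type*} [Fintype α] [DecidableEq α] [Fintype β] [DecidableEq β]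
  [Fintype η] [DecidableEq η] [Fintype τ]

theorem exists_orthogonal_conj_diagonal {D : Matrix β β ℝ} (hD : D.IsSymm) :
    ∃ (Q : Matrix β β ℝ) (l : β → ℝ), Q * Qᵀ = 1 ∧ D = Q * diagonal l * Qᵀ := by
  have hD : D.IsHermitian := by rwa [IsHermitian, conjTranspose_eq_transpose_of_trivial]
  refine ⟨hD.eigenvectorUnitary, hD.eigenvalues, ?_, ?_⟩
  · simpa [star_eq_conjTranspose] using Unitary.coe_mul_star_self hD.eigenvectorUnitary
  · simpa [Unitary.conjStarAlgAut_apply, star_eq_conjTranspose, Function.comp_def]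
      using hD.spectral_theorem

theorem specMultiset_diagonal [DecidableEq τ] (μ : τ → ℝ) :
    specMultiset (diagonal μ) = Finset.univ.val.map μ := by
  rw [specMultiset, charpoly_diagonal]
  simpa only [Multiset.map_map, Finset.prod, Function.comp_def] using
    Polynomial.roots_multiset_prod_X_sub_C (Finset.univ.val.map μ)

theorem specMultiset_eq_add_of_charpoly_eq_mul [DecidableEq τ] {N : Matrix η η ℝ} {M : Matrix α α ℝ}
    {L : Matrix τ τ ℝ} (h : N.charpoly = M.charpoly * L.charpoly) :
    specMultiset N = specMultiset M + specMultiset L := by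
  rw [specMultiset, h, Polynomial.roots_mul (M.charpoly_monic.mul L.charpoly_monic).ne_zero]
  rfl

theorem exists_inS_partialJoin_specMultiset_eq_add {G : SimpleGraph (α ⊕ β)} {H : SimpleGraph η}
    (hH : H.Connected) (hcard : Fintype.card η = Fintype.card (β ⊕ τ))
    {M : Matrix (α ⊕ β) (α ⊕ β) ℝ} (hM : inS G M)
    (hdistinct : (specMultiset M.toBlocks₂₂).Nodup) {μ : τ → ℝ} (hμinj : Function.Injective μ)
    (hμ : ∀ i, μ i ∉ specMultiset M.toBlocks₂₂) :
    ∃ N, inS (partialJoin (G.comap Sum.inl) {a | ∃ b, G.Adj (.inl a) (.inr b)} H) N ∧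
      specMultiset N = specMultiset M + Finset.univ.val.map μ := by
  classical
  obtain ⟨Q, l, hQ, hD⟩ :=
    exists_orthogonal_conj_diagonal (D := M.toBlocks₂₂) (hM.1.submatrix Sum.inr)
  have hspec : specMultiset M.toBlocks₂₂ = Finset.univ.val.map l := by
    rw [hD, specMultiset, charpoly_orthogonal_conj hQ, ← specMultiset, specMultiset_diagonal]
  rw [hspec] at hdistinct hμ
  have hl : Function.Injective l := fun i j hij =>
    Multiset.inj_on_of_nodup_map hdistinct i (Finset.mem_univ _) j (Finset.mem_univ _) hij
  have hlμ : Function.Injective (Sum.elim l μ) := hl.sumElim hμinj fun i j hij =>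
    hμ j (hij ▸ Multiset.mem_map_of_mem l (Finset.mem_univ _))
  have hA : inS (G.comap Sum.inl) M.toBlocks₁₁ :=
    ⟨hM.1.submatrix _, fun i j hij => hM.2 _ _ (Sum.inl_injective.ne hij)⟩
  have hB (a) : fromCols (M.toBlocks₁₂ * Q) (0 : Matrix α τ ℝ) a ≠ 0 ↔
      ∃ b, G.Adj (.inl a) (.inr b) := calc
    _ ↔ (M.toBlocks₁₂ * Q) a ≠ 0 := by simp [fromCols, funext_iff]
    _ ↔ M.toBlocks₁₂ a ≠ 0 :=
      ((vecMul_injective_of_isUnit (.of_mul_eq_one _ hQ)).eq_iff' (zero_vecMul Q)).not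
    _ ↔ ∃ b, G.Adj (.inl a) (.inr b) :=
      Function.ne_iff.trans (exists_congr fun b => hM.2 _ _ Sum.inl_ne_inr)
  obtain ⟨N, hN, hNcharpoly⟩ := exists_inS_partialJoin_charpoly_eq hH hcard hA
    (fromCols (M.toBlocks₁₂ * Q) 0) hlμ
  refine ⟨N, by simpa only [hB] using hN, ?_⟩
  rw [← specMultiset_diagonal μ]
  apply specMultiset_eq_add_of_charpoly_eq_mul
  rw [hNcharpoly, ← fromBlocks_diagonal, charpoly_fromBlocks_fromCols_zero,
    charpoly_eq_of_toBlocks₂₂_eq_orthogonal_conj hM.1 hQ hD]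

end Spectrum

theorem statement13_general {V W τ : Type*} [Fintype V] [DecidableEq V] [Fintype W]
    [DecidableEq W] [Fintype τ] (G : SimpleGraph V) (V₂ : Finset V)
    (H : SimpleGraph W) (hH : H.Connected) (hcard : Fintype.card W = V₂.card + Fintype.card τ)
    (M : Matrix V V ℝ) (hM : inS G M)
    (hdistinct : (specMultiset (M.submatrix (fun a : {x : V // x ∈ V₂} => (a : V))
      (fun a : {x : V // x ∈ V₂} => (a : V)))).Nodup)
    (μ : τ → ℝ) (hμinj : Function.Injective μ)
    (hμ : ∀ i, μ i ∉ specMultiset (M.submatrix (fun a : {x : V // x ∈ V₂} => (a : V))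
      (fun a : {x : V // x ∈ V₂} => (a : V)))) :
    ∃ N : Matrix ((↑(V₂ᶜ : Finset V) : Set V) ⊕ W) ((↑(V₂ᶜ : Finset V) : Set V) ⊕ W) ℝ,
      inS (partialJoin (G.induce (↑(V₂ᶜ : Finset V) : Set V))
        {a : (↑(V₂ᶜ : Finset V) : Set V) | ∃ w ∈ V₂, G.Adj ↑a w} H) N ∧
      specMultiset N = specMultiset M + Finset.univ.val.map μ := by
  classical
  let e : (↑(V₂ᶜ : Finset V) : Set V) ⊕ {x : V // x ∈ V₂} ≃ V :=
    (Equiv.sumComm _ _).trans <|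
      (Equiv.sumCongr (Equiv.refl _) (Equiv.subtypeEquivRight (by simp))).trans <|
        Equiv.sumCompl (· ∈ V₂)
  have hMe : inS (G.comap e) (M.submatrix e e) :=
    ⟨hM.1.submatrix e, fun i j hij => hM.2 _ _ (e.injective.ne hij)⟩
  obtain ⟨N, hN, hspec⟩ := exists_inS_partialJoin_specMultiset_eq_add hH (by simpa using hcard)
    hMe hdistinct hμinj hμ
  have hboundary : {a : (↑(V₂ᶜ : Finset V) : Set V) | ∃ w ∈ V₂, G.Adj ↑a w} =
      {a | ∃ b, (G.comap e).Adj (.inl a) (.inr b)} := by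
    ext a
    simp [e]
  refine ⟨N, hboundary ▸ hN, ?_⟩
  rw [hspec, specMultiset, specMultiset, ← charpoly_reindex e.symm M]
  rfl

/-- Theorem 3.8: let `V(G) = V₁ ∪ V₂` (with `V₁ = V₂ᶜ`), `X ⊆ V₁` the vertex
boundary of `V₂` in `G`, `H` connected with `|H| ≥ |V₂|` and `G' = (G[V₁], X) ∨ H`. If
`M ∈ S(G)` is such that `M[V₂]` has distinct eigenvalues, and `μ₁, …, μ_t`
(`t = |H| − |V₂|`) are distinct reals, none an eigenvalue of `M[V₂]`, then some `N ∈ S(G')`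
has spectrum `σ(M) ∪ {μ₁, …, μ_t}`. -/
theorem statement13 (n h : ℕ) (G : SimpleGraph (Fin n)) (V₂ : Finset (Fin n))
    (H : SimpleGraph (Fin h)) (hH : H.Connected) (hsize : V₂.card ≤ h)
    (M : Matrix (Fin n) (Fin n) ℝ) (hM : inS G M)
    (hdistinct : (specMultiset (M.submatrix (fun a : {x : Fin n // x ∈ V₂} => (a : Fin n))
      (fun a : {x : Fin n // x ∈ V₂} => (a : Fin n)))).Nodup)
    (μ : Fin (h - V₂.card) → ℝ) (hμinj : Function.Injective μ)
    (hμ : ∀ i, μ i ∉ specMultiset (M.submatrix (fun a : {x : Fin n // x ∈ V₂} => (a : Fin n))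
      (fun a : {x : Fin n // x ∈ V₂} => (a : Fin n)))) :
    ∃ N : Matrix ((↑(V₂ᶜ : Finset (Fin n)) : Set (Fin n)) ⊕ Fin h)
        ((↑(V₂ᶜ : Finset (Fin n)) : Set (Fin n)) ⊕ Fin h) ℝ,
      inS (partialJoin (G.induce (↑(V₂ᶜ : Finset (Fin n)) : Set (Fin n)))
        {a : (↑(V₂ᶜ : Finset (Fin n)) : Set (Fin n)) | ∃ w ∈ V₂, G.Adj ↑a w} H) N ∧
      specMultiset N = specMultiset M + Finset.univ.val.map μ := by
  exact statement13_general G V₂ H hH (by simp; omega) M hM hdistinct μ hμinj hμ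
end
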